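/- arXiv:1705.06372 — 5 statements merged into one kernel-verified Lean document; each statement's English description precedes it below -/
import Mathlib

section
/- Let q = 2^h, let 2 ≤ t < q, and let A be an elation KM-arc of type t in PG(2,q) with elation line m (for t = 2 this means that A is a hyperoval stabilised by a non-trivial elation with axis m). Then m is a t-secant to A, i.e. m contains exactly t points of A. -/
open scoped Classical

noncomputable section

variable {K : Type*} [Field K]

/-- The absolute trace-style sum `x + x² + x⁴ + ⋯ + x^(2^(h-1))`
(it lands in the prime subfield `F₂` when `|K| = 2^h`). -/
def Tr (h : ℕ) (x : K) : K := ∑ i ∈ Finset.range h, x ^ 2 ^ i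

/-- `F₂`-independence of a tuple of elements of a field of characteristic two:
no nontrivial combination with coefficients `0`/`1` vanishes. -/
def F2Indep {n : ℕ} (v : Fin n → K) : Prop :=
  ∀ c : Fin n → K, (∀ i, c i = 0 ∨ c i = 1) → ∑ i, c i * v i = 0 → ∀ i, c i = 0

/-- The `F₂`-span of a tuple of elements of a field of characteristic two. -/
def F2Span {n : ℕ} (v : Fin n → K) : Set K :=
  {x | ∃ c : Fin n → K, (∀ i, c i = 0 ∨ c i = 1) ∧ x = ∑ i, c i * v i}

/-- `α·S` for an additive subgroup `S` of the field. -/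
def smulSub (α : K) (S : AddSubgroup K) : AddSubgroup K :=
  S.map (AddMonoidHom.mulLeft α)

/-- Points of `PG(2,q)`: one-dimensional subspaces of `K³`. -/
abbrev Pt (K : Type*) [Field K] := Projectivization K (Fin 3 → K)

/-- The point `(a : b : c)` of `PG(2,q)`. -/
def pt3 (a b c : K) (habc : ¬(a = 0 ∧ b = 0 ∧ c = 0)) : Pt K :=
  Projectivization.mk K ![a, b, c] (fun h0 => habc
    ⟨by simpa using congrFun h0 0, by simpa using congrFun h0 1, by simpa using congrFun h0 2⟩)

/-- The point `(a : b)` of `PG(1,q)`. -/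
def pt2 (a b : K) (hab : ¬(a = 0 ∧ b = 0)) : Projectivization K (Fin 2 → K) :=
  Projectivization.mk K ![a, b] (fun h0 => hab
    ⟨by simpa using congrFun h0 0, by simpa using congrFun h0 1⟩)

/-- An `F₂`-linear set of points of `PG(1,q)`: in characteristic two, the
`F₂`-subspaces of `K²` are exactly its additive subgroups. -/
def IsF2Linear (T : Set (Projectivization K (Fin 2 → K))) : Prop :=
  ∃ U : AddSubgroup (Fin 2 → K),
    T = {P | ∃ u : Fin 2 → K, ∃ hu : u ≠ 0, u ∈ U ∧ Projectivization.mk K u hu = P}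

/-- Lines of `PG(2,q)`: two-dimensional subspaces of `K³`. -/
def IsLine (L : Submodule K (Fin 3 → K)) : Prop := Module.finrank K L = 2

/-- Incidence of a point with a line. -/
def OnLine (P : Pt K) (L : Submodule K (Fin 3 → K)) : Prop := P.submodule ≤ L

/-- The number of points of `A` lying on the line `L`. -/
def secantCount (A : Set (Pt K)) (L : Submodule K (Fin 3 → K)) : ℕ :=
  {P ∈ A | OnLine P L}.ncard

/-- A KM-arc of type `t`: `q+t` points meeting every line in `0`, `2` or `t` points. -/
def IsKMArc (q t : ℕ) (A : Set (Pt K)) : Prop :=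
  A.ncard = q + t ∧ ∀ L : Submodule K (Fin 3 → K), IsLine L →
    secantCount A L = 0 ∨ secantCount A L = 2 ∨ secantCount A L = t

/-- The projectivity of `PG(2,q)` induced by an element of `GL(3,q)`. -/
def projMap (f : (Fin 3 → K) ≃ₗ[K] (Fin 3 → K)) : Pt K → Pt K :=
  Projectivization.map f.toLinearMap f.injective

/-- `f` induces an elation with axis `L` and centre `R`: it fixes every point of `L`
and maps every line through `R` to itself. -/
def IsElation (f : (Fin 3 → K) ≃ₗ[K] (Fin 3 → K)) (L : Submodule K (Fin 3 → K))
    (R : Pt K) : Prop :=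
  IsLine L ∧ OnLine R L ∧ (∀ P : Pt K, OnLine P L → projMap f P = P) ∧
    ∀ M : Submodule K (Fin 3 → K), IsLine M → OnLine R M →
      ∀ P : Pt K, OnLine P M → OnLine (projMap f P) M

/-- `f` induces an elation with axis `L` (for some centre on `L`). -/
def IsElationAxis (f : (Fin 3 → K) ≃ₗ[K] (Fin 3 → K)) (L : Submodule K (Fin 3 → K)) : Prop :=
  ∃ R : Pt K, IsElation f L R

/-- The projectivity induced by `f` stabilises the point set `A`. -/
def Stabilises (f : (Fin 3 → K) ≃ₗ[K] (Fin 3 → K)) (A : Set (Pt K)) : Prop :=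
  projMap f '' A = A

/-- `N` lies on every `t`-secant of `A` (i.e. `N` is the `t`-nucleus). -/
def IsNucleus (t : ℕ) (A : Set (Pt K)) (N : Pt K) : Prop :=
  ∀ L : Submodule K (Fin 3 → K), IsLine L → secantCount A L = t → OnLine N L

/-- An elation KM-arc of type `t` with `t`-nucleus `N` and elation line `linf`:
for every `t`-secant `L ≠ linf`, the group of elations with axis `linf` stabilising `A`
acts transitively on `A ∩ L`. -/
def IsElationKMArc (q t : ℕ) (A : Set (Pt K)) (N : Pt K)
    (linf : Submodule K (Fin 3 → K)) : Prop :=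
  IsKMArc q t A ∧ IsLine linf ∧ OnLine N linf ∧ IsNucleus t A N ∧
    ∀ L : Submodule K (Fin 3 → K), IsLine L → secantCount A L = t → L ≠ linf →
      ∀ P ∈ A, OnLine P L → ∀ Q ∈ A, OnLine Q L →
        ∃ f : (Fin 3 → K) ≃ₗ[K] (Fin 3 → K),
          IsElationAxis f linf ∧ Stabilises f A ∧ projMap f P = Q

/-- A translation KM-arc with translation line `l`: the group of elations with axis `l`
stabilising `A` acts transitively on `A \ l`. -/
def IsTranslationKMArc (A : Set (Pt K)) (l : Submodule K (Fin 3 → K)) : Prop :=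
  IsLine l ∧ ∀ P ∈ A, ¬OnLine P l → ∀ Q ∈ A, ¬OnLine Q l →
    ∃ f : (Fin 3 → K) ≃ₗ[K] (Fin 3 → K),
      IsElationAxis f l ∧ Stabilises f A ∧ projMap f P = Q

/-- The line `X = 0` of `PG(2,q)`. -/
def lineX0 (K : Type*) [Field K] : Submodule K (Fin 3 → K) :=
  LinearMap.ker (LinearMap.proj (R := K) (φ := fun _ : Fin 3 => K) 0)

/-- The line `Y = aX` of `PG(2,q)`. -/
def lineYaX (a : K) : Submodule K (Fin 3 → K) where
  carrier := {v | v 1 = a * v 0}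
  add_mem' := by
    intro v w hv hw
    simp only [Set.mem_setOf_eq, Pi.add_apply] at hv hw ⊢
    rw [hv, hw]; ring
  zero_mem' := by simp
  smul_mem' := by
    intro c v hv
    simp only [Set.mem_setOf_eq, Pi.smul_apply, smul_eq_mul] at hv ⊢
    rw [hv]; ring

/-- The point set of the `q/8`-construction (Theorem 4.4 of the paper), built from
`F₂`-independent `a 0, a 1, a 2` and coset representatives `b 0, b 1, b 2`. -/
def q8Arc (h : ℕ) (a b : Fin 3 → K) : Set (Pt K) :=
  {P | ∃ x : K, (∀ i, Tr h (a i ^ 2 * x) = 0) ∧ P = pt3 0 1 x (by simp)}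
    ∪ {P | ∃ l : Fin 3 → K, (∀ i, l i = 0 ∨ l i = 1) ∧ ∃ s : K, (∀ i, Tr h (a i * s) = 0) ∧
        P = pt3 1 (l 0 * a 0 + l 1 * a 1 + l 2 * a 2)
          ((l 0 + l 1 + l 2 + l 1 * l 2) * b 0 + (l 1 + l 2 + l 0 * l 2) * b 1
            + (l 2 + l 0 * l 1) * b 2 + s) (by simp)}

/-- The point set of the `q/16`-construction (Theorem 5.2 of the paper). -/
def q16Arc (h : ℕ) (a : Fin 4 → K) (α : K) (b : Fin 3 → K) : Set (Pt K) :=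
  {P | ∃ x : K, Tr h (a 0 * (a 0 + a 3) * x) = 0 ∧ Tr h (a 1 * (a 1 + a 3) * x) = 0 ∧
      Tr h (a 2 * (a 2 + a 3) * x) = 0 ∧ Tr h (a 3 * α * x) = 1 ∧ P = pt3 0 1 x (by simp)}
    ∪ {P | ∃ l : Fin 4 → K, (∀ i, l i = 0 ∨ l i = 1) ∧ ∃ s : K, (∀ i, Tr h (a i * s) = 0) ∧
        P = pt3 1 (l 0 * a 0 + l 1 * a 1 + l 2 * a 2 + l 3 * a 3)
          ((l 0 + l 1 + l 2 + l 1 * l 2) * b 0 + (l 1 + l 2 + l 0 * l 2) * b 1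
            + (l 2 + l 0 * l 1) * b 2 + s) (by simp)}

/-- The semilinear collineation of `PG(2,q)` sending the point spanned by `v`
to the point spanned by `M (ψ ∘ v)`. -/
def frobMap (ψ : K ≃+* K) (M : (Fin 3 → K) ≃ₗ[K] (Fin 3 → K)) (P : Pt K) : Pt K :=
  Projectivization.mk K (M fun i => ψ (P.rep i)) (by
    rw [LinearEquiv.map_ne_zero_iff]
    intro h0
    apply P.rep_nonzero
    funext i
    have h2 : P.rep i = 0 := ψ.injective (by rw [map_zero]; exact congrFun h0 i)
    simpa using h2)

/-!
Suppose that `m` misses `A`, and let `N` be the centre of the elations in question: the nucleus if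
`t > 2`, the centre of the given elation if `t = 2`. The lines through `N` that meet `A` partition
it into classes of size `t`. Fix a second point `S` of `m`. Every line through `S` other than `m`
meets `A` in no or two points, so it pairs off the points of `A`, and paired points lie in different
classes. Elations with axis `m` and centre `N` respect the pairing and fix every class, and they are
transitive on it, so the pairing descends to the classes. Hence the number of classes is even and
`2t` divides `q + t`, which is impossible for a power `q > t` of two.
-/

section Combinatorics

theorem not_two_mul_dvd_two_pow_add {h t : ℕ} (ht : t < 2 ^ h) : ¬2 * t ∣ 2 ^ h + t := by
  intro hdvd
  have htdvd : t ∣ 2 ^ h := (Nat.dvd_add_left dvd_rfl).1 ((Dvd.intro_left 2 rfl).trans hdvd)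
  obtain ⟨k, -, rfl⟩ := (Nat.dvd_prime_pow Nat.prime_two).1 htdvd
  have hkh : k < h := (Nat.pow_lt_pow_iff_right one_lt_two).1 ht
  rw [← pow_succ', Nat.dvd_add_right (pow_dvd_pow 2 hkh)] at hdvd
  exact absurd ((Nat.pow_dvd_pow_iff_le_right one_lt_two).1 hdvd) (by lia)

theorem ncard_eq_ncard_image_mul {α β : Type*} {s : Set α} (hs : s.Finite) {f : α → β} {t : ℕ}
    (hf : ∀ a ∈ s, {b ∈ s | f b = f a}.ncard = t) : s.ncard = (f '' s).ncard * t := by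
  lift s to Finset α using hs
  rw [← Finset.coe_image, Set.ncard_coe_finset, Set.ncard_coe_finset,
    Finset.card_eq_sum_card_image f s, Finset.sum_const_nat]
  intro b hb
  obtain ⟨a, ha, rfl⟩ := Finset.mem_image.1 hb
  rw [← hf a ha, ← Set.ncard_coe_finset, Finset.coe_filter]
  rfl

theorem even_ncard_of_existsUnique_rel {α : Type*} {s : Set α} (hs : s.Finite)
    {r : α → α → Prop} (hsymm : ∀ a b, r a b → r b a) (hirrefl : ∀ a, ¬r a a)
    (hr : ∀ a ∈ s, ∃! b, b ∈ s ∧ r a b) : Even s.ncard := by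
  have := hs.fintype
  let G : SimpleGraph s :=
    { Adj := fun a b ↦ r a b
      symm := ⟨fun a b ↦ hsymm a b⟩
      loopless := ⟨fun a ↦ hirrefl a⟩ }
  have hmatching : (⊤ : G.Subgraph).IsPerfectMatching := by
    refine SimpleGraph.Subgraph.isPerfectMatching_iff.2 fun a ↦ ?_
    obtain ⟨b, ⟨hb, hab⟩, huniq⟩ := hr a a.2
    exact ⟨⟨b, hb⟩, hab, fun c hac ↦ Subtype.ext (huniq c ⟨c.2, hac⟩)⟩
  rw [← Nat.card_coe_set_eq, Nat.card_eq_fintype_card]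
  exact hmatching.even_card

end Combinatorics

section Incidence

variable {L M : Submodule K (Fin 3 → K)} {N P Q S : Pt K}

/-- The line joining two distinct points of `PG(2,q)`. If `P = Q` this is the one-dimensional
subspace `P`, which is not a line. -/
def joinLine (P Q : Pt K) : Submodule K (Fin 3 → K) := P.submodule ⊔ Q.submodule

theorem onLine_joinLine_left (P Q : Pt K) : OnLine P (joinLine P Q) := le_sup_left

theorem onLine_joinLine_right (P Q : Pt K) : OnLine Q (joinLine P Q) := le_sup_right

theorem onLine_mk {v : Fin 3 → K} (hv : v ≠ 0) :
    OnLine (Projectivization.mk K v hv) L ↔ v ∈ L := by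
  rw [OnLine, Projectivization.submodule_mk, Submodule.span_singleton_le_iff_mem]

theorem OnLine.ne (hP : OnLine P L) (hQ : ¬OnLine Q L) : P ≠ Q := by
  rintro rfl
  exact hQ hP

theorem isLine_joinLine (hPQ : P ≠ Q) : IsLine (joinLine P Q) := by
  have hspan := finrank_span_eq_card (Projectivization.linearIndependent_pair_iff_ne.2 hPQ)
  rwa [Matrix.range_cons, Matrix.range_cons, Matrix.range_empty, Set.union_empty,
    Submodule.span_union, ← P.submodule_eq, ← Q.submodule_eq, Fintype.card_fin] at hspan

theorem IsLine.eq_joinLine (hL : IsLine L) (hPQ : P ≠ Q) (hP : OnLine P L) (hQ : OnLine Q L) :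
    L = joinLine P Q :=
  (Submodule.eq_of_le_of_finrank_eq (sup_le hP hQ) ((isLine_joinLine hPQ).trans hL.symm)).symm

theorem IsLine.eq_of_onLine (hL : IsLine L) (hM : IsLine M) (hPQ : P ≠ Q) (hPL : OnLine P L)
    (hQL : OnLine Q L) (hPM : OnLine P M) (hQM : OnLine Q M) : L = M :=
  (hL.eq_joinLine hPQ hPL hQL).trans (hM.eq_joinLine hPQ hPM hQM).symm

theorem joinLine_eq_joinLine_iff (hNP : N ≠ P) (hNQ : N ≠ Q) :
    joinLine N Q = joinLine N P ↔ OnLine Q (joinLine N P) :=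
  ⟨fun h ↦ h ▸ onLine_joinLine_right N Q, fun h ↦
    ((isLine_joinLine hNP).eq_joinLine hNQ (onLine_joinLine_left N P) h).symm⟩

theorem IsLine.not_onLine_joinLine (hL : IsLine L) (hS : OnLine S L) (hN : OnLine N L)
    (hSN : S ≠ N) (hP : ¬OnLine P L) : ¬OnLine N (joinLine S P) := fun hNSP ↦
  hP <| hL.eq_of_onLine (isLine_joinLine (hS.ne hP)) hSN hS hN (onLine_joinLine_left S P) hNSP ▸
    onLine_joinLine_right S P

theorem IsLine.exists_onLine_onLine (hL : IsLine L) (hM : IsLine M) :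
    ∃ P : Pt K, OnLine P L ∧ OnLine P M := by
  have hinf : L ⊓ M ≠ ⊥ := by
    intro hbot
    have hdim := Submodule.finrank_sup_add_finrank_inf_eq L M
    have hle := (L ⊔ M).finrank_le
    rw [hbot, finrank_bot, show Module.finrank K L = 2 from hL,
      show Module.finrank K M = 2 from hM] at hdim
    rw [Module.finrank_fin_fun] at hle
    lia
  obtain ⟨v, hv, hv0⟩ := Submodule.exists_mem_ne_zero_of_ne_bot hinf
  exact ⟨Projectivization.mk K v hv0, (onLine_mk hv0).2 hv.1, (onLine_mk hv0).2 hv.2⟩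

theorem IsLine.exists_onLine_ne (hL : IsLine L) (N : Pt K) : ∃ P : Pt K, OnLine P L ∧ P ≠ N := by
  by_contra! hN
  have hle : L ≤ N.submodule := by
    intro v hv
    rcases eq_or_ne v 0 with rfl | hv0
    · exact zero_mem _
    · rw [← hN _ ((onLine_mk hv0).2 hv), Projectivization.submodule_mk]
      exact Submodule.mem_span_singleton_self v
  have hdim := Submodule.finrank_mono hle
  rw [N.finrank_submodule, show Module.finrank K L = 2 from hL] at hdim
  lia

theorem IsLine.exists_not_onLine_not_onLine (hL : IsLine L) (hM : IsLine M) :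
    ∃ P : Pt K, ¬OnLine P L ∧ ¬OnLine P M := by
  have hlt {L : Submodule K (Fin 3 → K)} (hL : IsLine L) : ¬⊤ ≤ L := by
    intro htop
    have hdim := Submodule.finrank_mono htop
    rw [finrank_top, Module.finrank_fin_fun, show Module.finrank K L = 2 from hL] at hdim
    lia
  have hcover : ¬((⊤ : Submodule K (Fin 3 → K)) : Set (Fin 3 → K)) ⊆ L ∪ M := by
    rw [AddSubgroupClass.subset_union]
    exact not_or.2 ⟨hlt hL, hlt hM⟩
  obtain ⟨v, -, hv⟩ := Set.not_subset.1 hcover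
  obtain ⟨hvL, hvM⟩ := not_or.1 hv
  have hv0 : v ≠ 0 := fun h ↦ hvL (h ▸ zero_mem L)
  exact ⟨Projectivization.mk K v hv0, mt (onLine_mk hv0).1 hvL, mt (onLine_mk hv0).1 hvM⟩

theorem ncard_le_of_injOn_joinLine [Finite K] {B : Set (Pt K)} (hP : P ∉ B)
    (hB : Set.InjOn (joinLine P) B) : B.ncard ≤ Nat.card K + 1 := by
  have hne (Q : B) : P.submodule.mkQ Q.1.rep ≠ 0 := by
    intro hzero
    have hle : Q.1.submodule ≤ P.submodule := by
      rwa [Q.1.submodule_eq, Submodule.span_singleton_le_iff_mem, ← Submodule.ker_mkQ P.submodule]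
    have heq := Submodule.eq_of_le_of_finrank_eq hle
      (Q.1.finrank_submodule.trans P.finrank_submodule.symm)
    exact hP (Projectivization.submodule_injective heq ▸ Q.2)
  let project (Q : B) : Projectivization K ((Fin 3 → K) ⧸ P.submodule) :=
    Projectivization.mk K _ (hne Q)
  have hjoin (Q : B) : joinLine P Q = (project Q).submodule.comap P.submodule.mkQ := by
    rw [Projectivization.submodule_mk, ← Set.image_singleton, ← Submodule.map_span,
      ← Q.1.submodule_eq, Submodule.comap_map_mkQ, joinLine]
  have hinj : Function.Injective project := fun Q R h ↦
    Subtype.ext (hB Q.2 R.2 (by rw [hjoin, hjoin, h]))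
  have hdim : Module.finrank K ((Fin 3 → K) ⧸ P.submodule) = 2 := by
    have hsum := P.submodule.finrank_quotient_add_finrank
    rw [P.finrank_submodule, Module.finrank_fin_fun] at hsum
    lia
  calc
    B.ncard = Nat.card B := (Nat.card_coe_set_eq B).symm
    _ ≤ Nat.card (Projectivization K ((Fin 3 → K) ⧸ P.submodule)) :=
      have : Finite ((Fin 3 → K) ⧸ P.submodule) := Module.finite_of_finite K
      Nat.card_le_card_of_injective project hinj
    _ = Nat.card K + 1 := Projectivization.card_of_finrank_two K _ hdim

end Incidence

section Elations

variable {f : (Fin 3 → K) ≃ₗ[K] (Fin 3 → K)} {L m : Submodule K (Fin 3 → K)} {P Q R X : Pt K}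

theorem submodule_projMap (f : (Fin 3 → K) ≃ₗ[K] (Fin 3 → K)) (P : Pt K) :
    (projMap f P).submodule = P.submodule.map f.toLinearMap := by
  induction P using Projectivization.ind with
  | h v hv =>
    rw [projMap, Projectivization.map_mk, Projectivization.submodule_mk,
      Projectivization.submodule_mk, Submodule.map_span, Set.image_singleton]

theorem projMap_injective (f : (Fin 3 → K) ≃ₗ[K] (Fin 3 → K)) : Function.Injective (projMap f) :=
  Projectivization.map_injective _ f.injective

theorem map_joinLine (f : (Fin 3 → K) ≃ₗ[K] (Fin 3 → K)) (P Q : Pt K) :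
    (joinLine P Q).map f.toLinearMap = joinLine (projMap f P) (projMap f Q) := by
  rw [joinLine, Submodule.map_sup, ← submodule_projMap, ← submodule_projMap, joinLine]

theorem OnLine.map (hP : OnLine P L) (f : (Fin 3 → K) ≃ₗ[K] (Fin 3 → K)) :
    OnLine (projMap f P) (L.map f.toLinearMap) :=
  (submodule_projMap f P).trans_le (Submodule.map_mono hP)

theorem IsElation.centre_onLine (hf : IsElation f m R) (hL : IsLine L) (hP : OnLine P L)
    (hfP : OnLine (projMap f P) L) (hne : projMap f P ≠ P) : OnLine R L := by
  obtain ⟨-, hRm, haxis, hcentre⟩ := hf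
  have hRP : R ≠ P := fun h ↦ hne (h ▸ haxis R hRm)
  have hfP' := hcentre _ (isLine_joinLine hRP) (onLine_joinLine_left R P) P
    (onLine_joinLine_right R P)
  rw [hL.eq_of_onLine (isLine_joinLine hRP) hne hfP hP hfP' (onLine_joinLine_right R P)]
  exact onLine_joinLine_left R P

theorem IsElation.onLine_projMap_of_fixed (hf : IsElation f m R) (hP : ¬OnLine P m)
    (hfP : projMap f P = P) (hL : IsLine L) (hPL : OnLine P L) (hX : OnLine X L) :
    OnLine (projMap f X) L := by
  obtain ⟨Y, hYL, hYm⟩ := hL.exists_onLine_onLine hf.1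
  have hmap : L.map f.toLinearMap = L := by
    rw [hL.eq_joinLine (hYm.ne hP) hYL hPL, map_joinLine, hfP, hf.2.2.1 Y hYm]
  exact hmap ▸ hX.map f

theorem IsElation.projMap_eq_self_of_fixed (hf : IsElation f m R) (hP : ¬OnLine P m)
    (hfP : projMap f P = P) (hX : ¬OnLine X (joinLine R P)) : projMap f X = X := by
  by_contra hne
  have hPX : P ≠ X := (onLine_joinLine_right R P).ne hX
  have hfX := hf.onLine_projMap_of_fixed hP hfP (isLine_joinLine hPX) (onLine_joinLine_left P X)
    (onLine_joinLine_right P X)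
  have hR := hf.centre_onLine (isLine_joinLine hPX) (onLine_joinLine_right P X) hfX hne
  have hline := (isLine_joinLine hPX).eq_joinLine (hf.2.1.ne hP) hR (onLine_joinLine_left P X)
  exact hX (hline ▸ onLine_joinLine_right P X)

theorem IsElation.projMap_eq_id_of_fixed (hf : IsElation f m R) (hP : ¬OnLine P m)
    (hfP : projMap f P = P) : projMap f = id := by
  obtain ⟨Q, hQm, hQ⟩ :=
    hf.1.exists_not_onLine_not_onLine (isLine_joinLine (hf.2.1.ne hP))
  have hfQ := hf.projMap_eq_self_of_fixed hP hfP hQ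
  funext X
  by_cases hXP : OnLine X (joinLine R P)
  · by_cases hXR : X = R
    · exact hXR ▸ hf.2.2.1 R hf.2.1
    · refine hf.projMap_eq_self_of_fixed hQm hfQ fun hXQ ↦ hQ ?_
      rw [(isLine_joinLine (hf.2.1.ne hP)).eq_of_onLine (isLine_joinLine (hf.2.1.ne hQm)) hXR hXP
        (onLine_joinLine_left R P) hXQ (onLine_joinLine_left R Q)]
      exact onLine_joinLine_right R Q
  · exact hf.projMap_eq_self_of_fixed hP hfP hXP

end Elations

section Secants

variable {A : Set (Pt K)} {L : Submodule K (Fin 3 → K)} {P Q R : Pt K} {q t : ℕ}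

theorem exists_mem_ne_of_one_lt_secantCount (hL : 1 < secantCount A L) (P : Pt K) :
    ∃ Q ∈ A, OnLine Q L ∧ Q ≠ P := by
  obtain ⟨Q, hQ, hne⟩ := Set.exists_ne_of_one_lt_ncard hL P
  exact ⟨Q, hQ.1, hQ.2, hne⟩

theorem eq_of_secantCount_eq_two (hL : secantCount A L = 2) (hP : P ∈ A) (hPL : OnLine P L)
    (hQ : Q ∈ A) (hQL : OnLine Q L) (hQP : Q ≠ P) (hR : R ∈ A) (hRL : OnLine R L)
    (hRP : R ≠ P) : Q = R := by
  have hsecant : {X ∈ A | OnLine X L}.ncard = 2 := hL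
  obtain ⟨X, Y, -, hXY⟩ := Set.ncard_eq_two.1 hsecant
  simp only [Set.ext_iff, Set.mem_ofPred_eq, Set.mem_insert_iff, Set.mem_singleton_iff] at hXY
  grind

variable [Finite K]

theorem secantCount_ne_zero (hP : P ∈ A) (hPL : OnLine P L) : secantCount A L ≠ 0 :=
  Set.ncard_ne_zero_of_mem (s := {P ∈ A | OnLine P L}) ⟨hP, hPL⟩

theorem IsKMArc.secantCount_eq_two_or (hA : IsKMArc q t A) (hL : IsLine L) (hP : P ∈ A)
    (hPL : OnLine P L) : secantCount A L = 2 ∨ secantCount A L = t :=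
  (hA.2 L hL).resolve_left (secantCount_ne_zero hP hPL)

theorem IsKMArc.exists_t_secant (ht : 2 < t) (hA : IsKMArc (Nat.card K) t A) (hP : P ∈ A) :
    ∃ L, IsLine L ∧ OnLine P L ∧ secantCount A L = t := by
  by_contra! hnone
  have hinj : Set.InjOn (joinLine P) (A \ {P}) := by
    rintro Q ⟨hQ, hQP⟩ R ⟨hR, hRP⟩ hQR
    have hline := isLine_joinLine (Ne.symm hRP)
    have htwo := (hA.secantCount_eq_two_or hline hP (onLine_joinLine_left P R)).resolve_right
      (hnone _ hline (onLine_joinLine_left P R))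
    exact eq_of_secantCount_eq_two htwo hP (onLine_joinLine_left P R) hQ
      (hQR ▸ onLine_joinLine_right P Q) hQP hR (onLine_joinLine_right P R) hRP
  have hle := ncard_le_of_injOn_joinLine (fun h ↦ h.2 rfl) hinj
  rw [Set.ncard_sdiff_singleton_of_mem hP, hA.1] at hle
  lia

theorem IsKMArc.secantCount_eq_of_isNucleus {N : Pt K} (ht : 2 < t)
    (hA : IsKMArc (Nat.card K) t A) (hN : IsNucleus t A N) (hL : IsLine L) (hNL : OnLine N L)
    (hP : P ∈ A) (hPL : OnLine P L) : secantCount A L = t := by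
  have hone : 1 < secantCount A L := by
    rcases hA.secantCount_eq_two_or hL hP hPL with h | h <;> lia
  obtain ⟨Q, hQ, hQL, hQN⟩ := exists_mem_ne_of_one_lt_secantCount hone N
  obtain ⟨M, hM, hQM, hMt⟩ := hA.exists_t_secant ht hQ
  rwa [hL.eq_of_onLine hM hQN hQL hNL hQM (hN M hM hMt)]

end Secants

section ExternalAxis

/-- The elations with axis `m` and centre `N` that stabilise `A` act transitively on the points of
`A` on each line through `N`. Only distinct points are considered, the identity being an elation
with every centre on the axis. -/
def IsElationTransitive (A : Set (Pt K)) (m : Submodule K (Fin 3 → K)) (N : Pt K) : Prop :=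
  ∀ P ∈ A, ∀ Q ∈ A, P ≠ Q → joinLine N P = joinLine N Q →
    ∃ f : (Fin 3 → K) ≃ₗ[K] (Fin 3 → K), IsElation f m N ∧ Stabilises f A ∧ projMap f P = Q

/-- The pairing of the points of `A` by the lines through `S`: distinct points `P` and `Q` of `A`
are paired if `SP = SQ`. Where it is used, `S ∉ A` and the lines from `S` to points of `A` are
`2`-secants, so that every point of `A` has exactly one partner. -/
def ArePaired (A : Set (Pt K)) (S P Q : Pt K) : Prop :=
  P ∈ A ∧ Q ∈ A ∧ P ≠ Q ∧ joinLine S P = joinLine S Q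

variable {A : Set (Pt K)} {m : Submodule K (Fin 3 → K)} {N S P P' Q Q' : Pt K} {t : ℕ}

theorem ArePaired.symm (h : ArePaired A S P Q) : ArePaired A S Q P :=
  ⟨h.2.1, h.1, h.2.2.1.symm, h.2.2.2.symm⟩

theorem ArePaired.map {f : (Fin 3 → K) ≃ₗ[K] (Fin 3 → K)} (h : ArePaired A S P Q)
    (hf : Stabilises f A) (hS : projMap f S = S) :
    ArePaired A S (projMap f P) (projMap f Q) := by
  obtain ⟨hP, hQ, hPQ, hline⟩ := h
  refine ⟨hf ▸ Set.mem_image_of_mem _ hP, hf ▸ Set.mem_image_of_mem _ hQ,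
    (projMap_injective f).ne hPQ, ?_⟩
  rw [← hS, ← map_joinLine, ← map_joinLine, hline]

theorem ArePaired.joinLine_ne (hm : IsLine m) (hS : OnLine S m) (hN : OnLine N m) (hSN : S ≠ N)
    (hP : ¬OnLine P m) (h : ArePaired A S P Q) : joinLine N P ≠ joinLine N Q := by
  obtain ⟨-, -, hPQ, hline⟩ := h
  intro hNPQ
  have hNS : joinLine N P = joinLine S P := (isLine_joinLine (hN.ne hP)).eq_of_onLine
    (isLine_joinLine (hS.ne hP)) hPQ (onLine_joinLine_right N P)
    (hNPQ ▸ onLine_joinLine_right N Q) (onLine_joinLine_right S P)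
    (hline ▸ onLine_joinLine_right S Q)
  exact hm.not_onLine_joinLine hS hN hSN hP (hNS ▸ onLine_joinLine_left N P)

theorem ArePaired.unique (hS : secantCount A (joinLine S P) = 2) (hQ : ArePaired A S P Q)
    (hQ' : ArePaired A S P Q') : Q = Q' := by
  obtain ⟨hP, hQA, hPQ, hline⟩ := hQ
  obtain ⟨-, hQA', hPQ', hline'⟩ := hQ'
  exact eq_of_secantCount_eq_two hS hP (onLine_joinLine_right S P) hQA
    (hline ▸ onLine_joinLine_right S Q) hPQ.symm hQA' (hline' ▸ onLine_joinLine_right S Q')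
    hPQ'.symm

theorem exists_arePaired (hSA : S ∉ A) (hP : P ∈ A) (hS : secantCount A (joinLine S P) = 2) :
    ∃ Q, ArePaired A S P Q := by
  obtain ⟨Q, hQ, hQS, hQP⟩ := exists_mem_ne_of_one_lt_secantCount (hS ▸ one_lt_two) P
  have hne {X : Pt K} (hX : X ∈ A) : S ≠ X := fun h ↦ hSA (h ▸ hX)
  exact ⟨Q, hP, hQ, hQP.symm, ((joinLine_eq_joinLine_iff (hne hP) (hne hQ)).2 hQS).symm⟩

theorem IsElationTransitive.joinLine_eq_of_arePaired (htrans : IsElationTransitive A m N)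
    (hSm : OnLine S m) (hext : ∀ P ∈ A, ¬OnLine P m)
    (hS : ∀ P ∈ A, secantCount A (joinLine S P) = 2) (hPQ : ArePaired A S P Q)
    (hPQ' : ArePaired A S P' Q') (hPP' : joinLine N P = joinLine N P') :
    joinLine N Q = joinLine N Q' := by
  rcases eq_or_ne P P' with rfl | hne
  · rw [hPQ.unique (hS P hPQ.1) hPQ']
  · obtain ⟨f, ⟨-, hNm, haxis, hcentre⟩, hstab, rfl⟩ := htrans P hPQ.1 P' hPQ'.1 hne hPP'
    have hfQ : projMap f Q = Q' := (hPQ.map hstab (haxis S hSm)).unique (hS _ hPQ'.1) hPQ'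
    have hNQ := hNm.ne (hext Q hPQ.2.1)
    have hNQ' := hNm.ne (hext Q' hPQ'.2.1)
    refine ((joinLine_eq_joinLine_iff hNQ hNQ').2 (hfQ ▸ ?_)).symm
    exact hcentre _ (isLine_joinLine hNQ) (onLine_joinLine_left N Q) Q (onLine_joinLine_right N Q)

variable [Finite K]

theorem IsElationTransitive.even_ncard_image_joinLine (htrans : IsElationTransitive A m N)
    (hm : IsLine m) (hSm : OnLine S m) (hNm : OnLine N m) (hSN : S ≠ N)
    (hext : ∀ P ∈ A, ¬OnLine P m) (hS : ∀ P ∈ A, secantCount A (joinLine S P) = 2) :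
    Even (joinLine N '' A).ncard := by
  refine even_ncard_of_existsUnique_rel (A.toFinite.image _)
    (r := fun L M ↦ ∃ P Q, ArePaired A S P Q ∧ joinLine N P = L ∧ joinLine N Q = M) ?_ ?_ ?_
  · rintro L M ⟨P, Q, hPQ, hP, hQ⟩
    exact ⟨Q, P, hPQ.symm, hQ, hP⟩
  · rintro L ⟨P, Q, hPQ, hP, hQ⟩
    exact hPQ.joinLine_ne hm hSm hNm hSN (hext P hPQ.1) (hP.trans hQ.symm)
  · rintro _ ⟨P, hP, rfl⟩
    obtain ⟨Q, hPQ⟩ := exists_arePaired (fun h ↦ hext S h hSm) hP (hS P hP)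
    refine ⟨joinLine N Q, ⟨Set.mem_image_of_mem _ hPQ.2.1, P, Q, hPQ, rfl, rfl⟩, ?_⟩
    rintro _ ⟨-, P', Q', hPQ', hPP', rfl⟩
    exact htrans.joinLine_eq_of_arePaired hSm hext hS hPQ' hPQ hPP'

theorem ncard_eq_ncard_image_joinLine_mul (hNA : N ∉ A)
    (hN : ∀ P ∈ A, secantCount A (joinLine N P) = t) :
    A.ncard = (joinLine N '' A).ncard * t := by
  refine ncard_eq_ncard_image_mul A.toFinite fun P hP ↦ ?_
  have hne {X : Pt K} (hX : X ∈ A) : N ≠ X := fun h ↦ hNA (h ▸ hX)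
  rw [← hN P hP, secantCount]
  congr 1
  ext Q
  exact and_congr_right fun hQ ↦ joinLine_eq_joinLine_iff (hne hP) (hne hQ)

theorem IsElationTransitive.two_mul_dvd_ncard (htrans : IsElationTransitive A m N)
    (hm : IsLine m) (hNm : OnLine N m) (hext : ∀ P ∈ A, ¬OnLine P m)
    (hthrough : ∀ P ∈ A, secantCount A (joinLine N P) = t)
    (hoff : ∀ L, IsLine L → ¬OnLine N L → ∀ P ∈ A, OnLine P L → secantCount A L = 2) :
    2 * t ∣ A.ncard := by
  obtain ⟨S, hSm, hSN⟩ := hm.exists_onLine_ne N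
  have hS : ∀ P ∈ A, secantCount A (joinLine S P) = 2 := fun P hP ↦
    hoff _ (isLine_joinLine (hSm.ne (hext P hP)))
      (hm.not_onLine_joinLine hSm hNm hSN (hext P hP)) P hP (onLine_joinLine_right S P)
  rw [ncard_eq_ncard_image_joinLine_mul (fun h ↦ hext N h hNm) hthrough]
  exact mul_dvd_mul_right (htrans.even_ncard_image_joinLine hm hSm hNm hSN hext hS).two_dvd t

end ExternalAxis

section ElationKMArcs

variable {A : Set (Pt K)} {m : Submodule K (Fin 3 → K)} {N R : Pt K} {h q t : ℕ}

theorem IsElationKMArc.isElationTransitive (hA : IsElationKMArc q t A N m)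
    (hext : ∀ P ∈ A, ¬OnLine P m) (hthrough : ∀ P ∈ A, secantCount A (joinLine N P) = t) :
    IsElationTransitive A m N := by
  obtain ⟨-, hm, hNm, -, htrans⟩ := hA
  intro P hP Q hQ hPQ hline
  have hNP := hNm.ne (hext P hP)
  have hPN := onLine_joinLine_right N P
  have hQN : OnLine Q (joinLine N P) := hline ▸ onLine_joinLine_right N Q
  have hne : joinLine N P ≠ m := fun heq ↦ hext P hP (heq ▸ hPN)
  obtain ⟨f, ⟨R, hf⟩, hstab, rfl⟩ :=
    htrans _ (isLine_joinLine hNP) (hthrough P hP) hne P hP hPN Q hQ hQN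
  have hR := hf.centre_onLine (isLine_joinLine hNP) hPN hQN hPQ.symm
  have hRN : R = N := by
    by_contra hRN
    exact hne ((isLine_joinLine hNP).eq_of_onLine hm hRN hR (onLine_joinLine_left N P) hf.2.1 hNm)
  exact ⟨f, hRN ▸ hf, hstab, rfl⟩

theorem IsElation.isElationTransitive {f : (Fin 3 → K) ≃ₗ[K] (Fin 3 → K)} (hf : IsElation f m R)
    (hstab : Stabilises f A) (hid : projMap f ≠ id) (hext : ∀ P ∈ A, ¬OnLine P m)
    (hthrough : ∀ P ∈ A, secantCount A (joinLine R P) = 2) : IsElationTransitive A m R := by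
  intro P hP Q hQ hPQ hline
  have hfP : projMap f P ∈ A := hstab ▸ Set.mem_image_of_mem _ hP
  have hfPR : OnLine (projMap f P) (joinLine R P) :=
    hf.2.2.2 _ (isLine_joinLine (hf.2.1.ne (hext P hP))) (onLine_joinLine_left R P) P
      (onLine_joinLine_right R P)
  have hne : projMap f P ≠ P := mt (hf.projMap_eq_id_of_fixed (hext P hP)) hid
  exact ⟨f, hf, hstab, eq_of_secantCount_eq_two (hthrough P hP) hP (onLine_joinLine_right R P) hfP
    hfPR hne hQ (hline ▸ onLine_joinLine_right R Q) hPQ.symm⟩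

variable [Finite K]

theorem IsElationKMArc.secantCount_eq (hK : Nat.card K = 2 ^ h) (ht : 2 < t) (htq : t < 2 ^ h)
    (hA : IsElationKMArc (2 ^ h) t A N m) : secantCount A m = t := by
  obtain ⟨harc, hm, hNm, hnuc, -⟩ := id hA
  by_contra hmt
  have hline : ∀ L, IsLine L → OnLine N L → ∀ P ∈ A, OnLine P L → secantCount A L = t :=
    fun L hL hNL P hP hPL ↦ (hK ▸ harc).secantCount_eq_of_isNucleus ht hnuc hL hNL hP hPL
  have hext : ∀ P ∈ A, ¬OnLine P m := fun P hP hPm ↦ hmt (hline m hm hNm P hP hPm)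
  have hthrough : ∀ P ∈ A, secantCount A (joinLine N P) = t := fun P hP ↦
    hline _ (isLine_joinLine (hNm.ne (hext P hP))) (onLine_joinLine_left N P) P hP
      (onLine_joinLine_right N P)
  have hdvd := (hA.isElationTransitive hext hthrough).two_mul_dvd_ncard hm hNm hext hthrough
    fun L hL hNL P hP hPL ↦
      (harc.secantCount_eq_two_or hL hP hPL).resolve_right fun hLt ↦ hNL (hnuc L hL hLt)
  exact not_two_mul_dvd_two_pow_add htq (harc.1 ▸ hdvd)

theorem IsKMArc.secantCount_eq_two_of_isElationAxis {f : (Fin 3 → K) ≃ₗ[K] (Fin 3 → K)}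
    (hA : IsKMArc (2 ^ h) 2 A) (hq : 2 < 2 ^ h) (hf : IsElationAxis f m) (hstab : Stabilises f A)
    (hid : projMap f ≠ id) : secantCount A m = 2 := by
  obtain ⟨R, hf⟩ := hf
  by_contra hm2
  have hline : ∀ L, IsLine L → ∀ P ∈ A, OnLine P L → secantCount A L = 2 :=
    fun L hL P hP hPL ↦ or_self_iff.1 (hA.secantCount_eq_two_or hL hP hPL)
  have hext : ∀ P ∈ A, ¬OnLine P m := fun P hP hPm ↦ hm2 (hline m hf.1 P hP hPm)
  have hthrough : ∀ P ∈ A, secantCount A (joinLine R P) = 2 := fun P hP ↦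
    hline _ (isLine_joinLine (hf.2.1.ne (hext P hP))) P hP (onLine_joinLine_right R P)
  have hdvd := (hf.isElationTransitive hstab hid hext hthrough).two_mul_dvd_ncard hf.1 hf.2.1 hext
    hthrough fun L hL _ ↦ hline L hL
  exact not_two_mul_dvd_two_pow_add hq (hA.1 ▸ hdvd)

end ElationKMArcs

/-- the elation line of an elation KM-arc of type `t` (for `t = 2`:
a hyperoval stabilised by a non-trivial elation with this axis) is a `t`-secant. -/
theorem elation_line_is_t_secant
    {K : Type*} [Field K] [Fintype K] (h t : ℕ)
    (hcard : Fintype.card K = 2 ^ h)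
    (ht2 : 2 ≤ t) (htq : t < 2 ^ h)
    (A : Set (Pt K)) (m : Submodule K (Fin 3 → K))
    (hA : IsKMArc (2 ^ h) t A)
    (hel : (2 < t ∧ ∃ N : Pt K, IsElationKMArc (2 ^ h) t A N m)
      ∨ (t = 2 ∧ IsLine m ∧ ∃ f : (Fin 3 → K) ≃ₗ[K] (Fin 3 → K),
          IsElationAxis f m ∧ Stabilises f A ∧ projMap f ≠ id)) :
    secantCount A m = t := by
  rcases hel with ⟨ht, N, hel⟩ | ⟨rfl, -, f, hf, hstab, hid⟩
  · exact hel.secantCount_eq (Nat.card_eq_fintype_card.trans hcard) ht htq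
  · exact hA.secantCount_eq_two_of_isElationAxis htq hf hstab hid
end
end

section
/- Let q be a power of 2, let h > 1, and regard F_q as a subfield of F = F_{q^h}. Let I be a subgroup of the additive group (F,+) with F_q ∩ I = {0} and F_q + I = F (a direct complement of F_q in (F,+)), let t be a power of 2 with 2 < t ≤ q, and let S' be a subgroup of (F,+) of order t·q^(h-1). For each α ∈ F_q let U_α ⊆ F_q be a set that is either empty or of size t, and assume that at least one U_α is nonempty. If, for every α ∈ F_q with U_α ≠ ∅, the set U_α + I = {u + i : u ∈ U_α, i ∈ I} is a coset of S' in (F,+), then I ⊆ S', the set S = S' ∩ F_q is a subgroup of (F_q,+) of order t with S' = S + I, and every nonempty U_α is a coset of S in (F_q,+). -/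
open scoped Classical

noncomputable section

variable {K : Type*} [Field K]

/-!
Intersecting `U + I` with `F_q` recovers `U`, because `U ⊆ F_q` and `F_q ∩ I = 0`. If `U + I` is a
coset of `S'` and `u ∈ U`, then `U + I = u + S'`, and intersecting with `F_q` gives
`U = u + (S' ∩ F_q)`. Moreover `u` and `u + i` lie in the same coset of `S'` for every `i ∈ I`, so
`I ⊆ S'`, and the modular law yields `S' = S' ∩ (F_q + I) = (S' ∩ F_q) + I`.
-/

section LeftCosets

open scoped Pointwise

@[to_additive]
theorem setOf_exists_eq_mul {M : Type*} [Mul M] (A B : Set M) :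
    {x | ∃ a ∈ A, ∃ b ∈ B, x = a * b} = A * B := by
  ext x
  simp only [Set.mem_ofPred_eq, Set.mem_mul, eq_comm]

variable {G : Type*} [Group G] {H I S : Subgroup G} {A : Set G} {a g : G}

@[to_additive]
theorem mul_inter_eq_left_of_disjoint (hHI : Disjoint H I) (hA : A ⊆ H) :
    A * (I : Set G) ∩ H = A := by
  refine Set.Subset.antisymm ?_ fun a ha => ⟨⟨a, ha, 1, I.one_mem, mul_one a⟩, hA ha⟩
  rintro _ ⟨⟨a, ha, i, hi, rfl⟩, hai⟩
  have hi_one : i = 1 :=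
    Subgroup.disjoint_def.1 hHI ((H.mul_mem_cancel_left (hA ha)).1 hai) hi
  simpa [hi_one] using ha

@[to_additive]
theorem smul_inter_eq_smul_inf_of_mem (S : Subgroup G) (ha : a ∈ H) :
    a • (S : Set G) ∩ H = a • ((S ⊓ H : Subgroup G) : Set G) := by
  rw [Subgroup.coe_inf, Set.smul_set_inter, leftCoset_mem_leftCoset H ha]

@[to_additive]
theorem mul_eq_smul_of_mem (hAI : A * (I : Set G) = g • (S : Set G)) (ha : a ∈ A) :
    A * (I : Set G) = a • (S : Set G) := by
  have ha_coset : a ∈ g • (S : Set G) := hAI ▸ ⟨a, ha, 1, I.one_mem, mul_one a⟩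
  rw [hAI, leftCoset_eq_iff]
  exact (mem_leftCoset_iff g).1 ha_coset

@[to_additive]
theorem le_of_mul_eq_smul (hAI : A * (I : Set G) = g • (S : Set G)) (hA : A.Nonempty) :
    I ≤ S := by
  obtain ⟨a, ha⟩ := hA
  intro i hi
  have hai : a * i ∈ a • (S : Set G) :=
    mul_eq_smul_of_mem hAI ha ▸ Set.mul_mem_mul ha hi
  simpa [mem_leftCoset_iff] using hai

@[to_additive]
theorem eq_smul_inf_of_mul_eq_smul (hHI : Disjoint H I) (hA : A ⊆ H)
    (hAI : A * (I : Set G) = g • (S : Set G)) (ha : a ∈ A) :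
    A = a • ((S ⊓ H : Subgroup G) : Set G) :=
  calc
    A = A * (I : Set G) ∩ H := (mul_inter_eq_left_of_disjoint hHI hA).symm
    _ = a • (S : Set G) ∩ H := by rw [mul_eq_smul_of_mem hAI ha]
    _ = a • ((S ⊓ H : Subgroup G) : Set G) := smul_inter_eq_smul_inf_of_mem S (hA ha)

@[to_additive]
theorem inf_mul_eq_of_mul_eq_univ (hHI : (H : Set G) * (I : Set G) = Set.univ) (hIS : I ≤ S) :
    ((S ⊓ H : Subgroup G) : Set G) * (I : Set G) = S := by
  rw [Subgroup.inf_mul_assoc S H I hIS, hHI, Set.inter_univ]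

end LeftCosets

open scoped Pointwise in
theorem gw_converse_general {G ι : Type*} [AddGroup G] {t : ℕ} {H I S' : AddSubgroup G}
    (hint : ∀ x ∈ H, x ∈ I → x = 0) (hsum : ∀ x : G, ∃ a ∈ H, ∃ i ∈ I, x = a + i)
    {J : Set ι} {U : ι → Set G} (hUsub : ∀ α ∈ J, ∀ u ∈ U α, u ∈ H)
    (hUcard : ∀ α ∈ J, U α = ∅ ∨ (U α).ncard = t) (hne : ∃ α ∈ J, U α ≠ ∅)
    (hcoset : ∀ α ∈ J, U α ≠ ∅ →
      ∃ β : G, {x : G | ∃ u ∈ U α, ∃ i ∈ I, x = u + i} = (fun s => β + s) '' (S' : Set G)) :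
    I ≤ S' ∧ Nat.card ↥(S' ⊓ H) = t ∧
      (S' : Set G) = {x : G | ∃ s ∈ S' ⊓ H, ∃ i ∈ I, x = s + i} ∧
      ∀ α ∈ J, U α ≠ ∅ →
        ∃ β ∈ H, U α = (fun s => β + s) '' ((S' ⊓ H : AddSubgroup G) : Set G) := by
  have hdisj : Disjoint H I := AddSubgroup.disjoint_def.2 fun hxH hxI => hint _ hxH hxI
  have huniv : (H : Set G) + (I : Set G) = Set.univ :=
    (setOf_exists_eq_add (H : Set G) I).symm.trans (Set.eq_univ_of_forall hsum)
  have hadd : ∀ α ∈ J, U α ≠ ∅ → ∃ β : G, U α + (I : Set G) = β +ᵥ (S' : Set G) :=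
    fun α hα hU => (hcoset α hα hU).imp fun _ hβ => (setOf_exists_eq_add (U α) I).symm.trans hβ
  have hUcoset : ∀ α ∈ J, U α ≠ ∅ →
      ∃ β ∈ H, U α = β +ᵥ ((S' ⊓ H : AddSubgroup G) : Set G) := by
    intro α hα hU
    obtain ⟨u, hu⟩ := Set.nonempty_iff_ne_empty.2 hU
    obtain ⟨β, hβ⟩ := hadd α hα hU
    exact ⟨u, hUsub α hα u hu, eq_vadd_inf_of_add_eq_vadd hdisj (hUsub α hα) hβ hu⟩
  obtain ⟨α, hα, hU⟩ := hne
  have hIS : I ≤ S' :=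
    let ⟨_, hβ⟩ := hadd α hα hU
    le_of_add_eq_vadd hβ (Set.nonempty_iff_ne_empty.2 hU)
  have hcard : Nat.card ↥(S' ⊓ H) = t := by
    obtain ⟨β, -, hβ⟩ := hUcoset α hα hU
    rw [← (hUcard α hα).resolve_left hU, hβ, Set.ncard_vadd_set]
    exact Nat.card_coe_set_eq _
  refine ⟨hIS, hcard, ?_, hUcoset⟩
  exact (inf_add_eq_of_add_eq_univ huniv hIS).symm.trans (setOf_exists_eq_add _ _).symm

/-- The fixed field of `x ↦ x ^ p ^ e`. This is the subfield `F_{p^e}` when `F` is a finite field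
whose degree over `F_p` is a multiple of `e`. -/
def frobeniusFixedField (F : Type*) [Field F] (p e : ℕ) [ExpChar F p] : Subfield F :=
  (iterateFrobenius F p e).eqLocusField (RingHom.id F)

/-- algebraic content of Theorem 2.6 of the paper. Inside `F = F_{q^h}`
the subfield `F_q` is `{x | x^q = x}`. If each nonempty `U_α + I` is a coset of `S'`,
then `I ⊆ S'`, `S = S' ∩ F_q` is an additive subgroup of order `t` with `S' = S + I`,
and every nonempty `U_α` is a coset of `S` inside `F_q`. -/
theorem gw_converse
    {F : Type*} [Field F] [Fintype F] (q e h t : ℕ)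
    (hq : q = 2 ^ e) (he : 1 ≤ e) (hh : 1 < h)
    (hcard : Fintype.card F = q ^ h)
    (I : AddSubgroup F)
    (hIint : ∀ x : F, x ^ q = x → x ∈ I → x = 0)
    (hIsum : ∀ x : F, ∃ a : F, a ^ q = a ∧ ∃ i ∈ I, x = a + i)
    (ht : ∃ j : ℕ, t = 2 ^ j) (ht2 : 2 < t) (htq : t ≤ q)
    (S' : AddSubgroup F) (hS' : Nat.card S' = t * q ^ (h - 1))
    (U : F → Set F)
    (hUsub : ∀ α : F, α ^ q = α → ∀ u ∈ U α, u ^ q = u)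
    (hUcard : ∀ α : F, α ^ q = α → U α = ∅ ∨ (U α).ncard = t)
    (hne : ∃ α : F, α ^ q = α ∧ U α ≠ ∅)
    (hcoset : ∀ α : F, α ^ q = α → U α ≠ ∅ →
      ∃ β : F, {x : F | ∃ u ∈ U α, ∃ i ∈ I, x = u + i} = (fun s => β + s) '' (S' : Set F)) :
    (I : Set F) ⊆ (S' : Set F) ∧
    ∃ S : AddSubgroup F, (S : Set F) = {x : F | x ∈ S' ∧ x ^ q = x} ∧
      Nat.card S = t ∧
      (S' : Set F) = {x : F | ∃ s ∈ S, ∃ i ∈ I, x = s + i} ∧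
      ∀ α : F, α ^ q = α → U α ≠ ∅ →
        ∃ β : F, β ^ q = β ∧ U α = (fun s => β + s) '' (S : Set F) := by
  subst hq
  have : Fact (Nat.Prime 2) := ⟨Nat.prime_two⟩
  have : CharP F 2 := charP_of_card_eq_prime_pow (hcard.trans (pow_mul 2 e h).symm)
  obtain ⟨hIS, hS⟩ := gw_converse_general (H := (frobeniusFixedField F 2 e).toAddSubgroup)
    (J := {α | α ^ 2 ^ e = α}) hIint hIsum hUsub hUcard hne hcoset
  exact ⟨hIS, _, rfl, hS⟩
end
end

section
/- Let q = 2^h and let β, γ ∈ F_q with γ ∉ {0,1}, β ∉ {0,1} and β + 1 ≠ γ, so that C = {(1:0), (0:1), (1:1), (γ:1), (β+1:1)} is a set of five distinct points of PG(1,q). Then C is an F_2-linear set if and only if β ∈ {γ, 1/(γ+1), √(γ+1), 1 + 1/γ, 1 + γ²}, where √(γ+1) denotes the unique square root of γ+1 in F_q. Moreover, if two of the five values γ, 1/(γ+1), √(γ+1), 1 + 1/γ, 1 + γ² coincide, then they all coincide and equal γ, with γ³ = 1; in that case, if β = γ, then C = {(1:x) : x ∈ F_4} ∪ {(0:1)}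 is an F_4-subline (here F_4 = {x ∈ F_q : x^4 = x}). -/
open scoped Classical

noncomputable section

variable {K : Type*} [Field K]

/-!
Let `U` be an additive subgroup of `K²` whose nonzero vectors span exactly five points. If every
point contained a single nonzero vector of `U`, then `U` would have `6` elements, which is not a
power of two; so some point, the *head*, contains two of them. Taking the head as point at
infinity, the affine coordinates of the other four points form a coset of an additive group of
order four, and in characteristic two this just means that these four distinct coordinates sum to
zero. Conversely, a head in this sense yields a group `U`. Testing each of the five points
`(1:0), (0:1), (1:1), (γ:1), (β+1:1)` as head gives one of the five values of `β`.
-/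

lemma add_self_eq_zero_of_charTwo {V : Type*} [AddCommGroup V] [Module K V] [CharP K 2] (v : V) :
    v + v = 0 := by
  rw [← two_smul K v, CharTwo.two_eq_zero, zero_smul]

lemma exists_finset_sum_eq_of_mem_closure_range {G ι : Type*} [AddCommGroup G]
    (hG : ∀ x : G, x + x = 0) {f : ι → G} {x : G} (hx : x ∈ AddSubgroup.closure (Set.range f)) :
    ∃ s : Finset ι, ∑ i ∈ s, f i = x := by
  obtain ⟨a, rfl⟩ := AddSubgroup.exists_finsupp_of_mem_closure_range f x hx
  refine ⟨a.support.filter fun i => Odd (a i), ?_⟩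
  rw [Finset.sum_filter, Finsupp.sum]
  refine Finset.sum_congr rfl fun i _ => ?_
  split_ifs with hi
  · obtain ⟨m, hm⟩ := hi
    rw [hm, add_zsmul, mul_comm, mul_zsmul, two_zsmul, hG, zsmul_zero, zero_add, one_zsmul]
  · obtain ⟨m, hm⟩ := Int.not_odd_iff_even.1 hi
    rw [hm, add_zsmul, hG]

lemma card_zero_insert_pair_add [CharP K 2] {a b : K} (ha : a ≠ 0) (hb : b ≠ 0) (hab : a ≠ b) :
    ({0, a, b, a + b} : Finset K).card = 4 := by
  have hab0 : a + b ≠ 0 := fun h => hab (CharTwo.add_eq_zero.1 h)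
  simp [ha, hb, hab, ha.symm, hb.symm, hab0.symm]

lemma sum_zero_insert_pair_add [CharP K 2] {a b : K} (ha : a ≠ 0) (hb : b ≠ 0) (hab : a ≠ b) :
    ∑ s ∈ ({0, a, b, a + b} : Finset K), s = 0 := by
  have hab0 : a + b ≠ 0 := fun h => hab (CharTwo.add_eq_zero.1 h)
  rw [Finset.sum_insert (by simp [ha.symm, hb.symm, hab0.symm]),
    Finset.sum_insert (by simp [hab, hb]), Finset.sum_pair (by simpa using ha), zero_add,
    ← add_assoc, CharTwo.add_self_eq_zero]

section HasPoints

variable {V ι : Type*} [AddCommGroup V]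

/-- The points spanned by the nonzero vectors of `U` are exactly the points spanned by the
vectors `p i`; for `V = K²` this says that `U` exhibits `{⟨p i⟩}` as an `F₂`-linear set. -/
structure HasPoints (K : Type*) [Field K] [Module K V] (U : AddSubgroup V) (p : ι → V) : Prop where
  exists_smul_eq : ∀ u ∈ U, u ≠ 0 → ∃ i, ∃ c : K, c • p i = u
  exists_smul_mem : ∀ i, ∃ c : K, c ≠ 0 ∧ c • p i ∈ U

variable [Module K V] {U : AddSubgroup V} {p : ι → V}

lemma index_eq_of_smul_eq_smul (hp : Pairwise fun i j => LinearIndependent K ![p i, p j]) {i j : ι}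
    {c d : K} (hc : c ≠ 0) (h : c • p i = d • p j) : i = j := by
  by_contra hij
  refine hc (LinearIndependent.pair_iff.1 (hp hij) c (-d) ?_).1
  rw [h, neg_smul, add_neg_cancel]

lemma HasPoints.card_eq [Finite ι] (hU : HasPoints K U p) (hp0 : ∀ i, p i ≠ 0)
    (hp : Pairwise fun i j => LinearIndependent K ![p i, p j])
    (hunique : ∀ i (a b : K), a ≠ 0 → b ≠ 0 → a • p i ∈ U → b • p i ∈ U → a = b) :
    Nat.card U = Nat.card ι + 1 := by
  choose c hc hcU using hU.exists_smul_mem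
  have hne (i : ι) : c i • p i ≠ 0 := smul_ne_zero (hc i) (hp0 i)
  let f : Option ι → U := fun o => o.elim 0 fun i => ⟨c i • p i, hcU i⟩
  have hf : f.Bijective := by
    constructor
    · rintro (_ | i) (_ | j) hij
      · rfl
      · exact absurd (congrArg Subtype.val hij).symm (hne j)
      · exact absurd (congrArg Subtype.val hij) (hne i)
      · exact congrArg some (index_eq_of_smul_eq_smul hp (hc i) (congrArg Subtype.val hij))
    · rintro ⟨u, hu⟩
      rcases eq_or_ne u 0 with rfl | hu0
      · exact ⟨none, rfl⟩
      · obtain ⟨i, d, rfl⟩ := hU.exists_smul_eq u hu hu0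
        have hd : d ≠ 0 := (smul_ne_zero_iff.1 hu0).1
        exact ⟨some i, Subtype.ext
          (congrArg (· • p i) (hunique i (c i) d (hc i) hd (hcU i) hu))⟩
  rw [← Nat.card_eq_of_bijective f hf, Finite.card_option]

-- Otherwise `U`, a vector space over `F₂`, would have one element more than there are points.
lemma HasPoints.exists_pair_smul_mem [CharP K 2] (hU : HasPoints K U p)
    (hι : ∀ n, Nat.card ι + 1 ≠ 2 ^ n) (hp0 : ∀ i, p i ≠ 0)
    (hp : Pairwise fun i j => LinearIndependent K ![p i, p j]) :
    ∃ i, ∃ a b : K, a ≠ 0 ∧ b ≠ 0 ∧ a ≠ b ∧ a • p i ∈ U ∧ b • p i ∈ U := by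
  by_contra! hunique
  have hι0 : Nat.card ι ≠ 0 := fun h => hι 0 (by rw [h, zero_add, pow_zero])
  have : Finite ι := Nat.finite_of_card_ne_zero hι0
  have hcard : Nat.card U = Nat.card ι + 1 :=
    hU.card_eq hp0 hp fun i a b ha hb haU hbU =>
      by_contra fun hab => hunique i a b ha hb hab haU hbU
  have : Finite U := Nat.finite_of_card_ne_zero (hcard ▸ Nat.succ_ne_zero _)
  let : Module (ZMod 2) U := AddCommGroup.zmodModule fun x => by
    rw [two_nsmul]
    exact Subtype.ext (add_self_eq_zero_of_charTwo (K := K) (x : V))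
  have hpow : Nat.card U = 2 ^ Module.finrank (ZMod 2) U := by
    rw [Module.natCard_eq_pow_finrank (K := ZMod 2), Nat.card_zmod]
  exact hι _ (hcard.symm.trans hpow)

end HasPoints

lemma isF2Linear_range_mk_iff {ι : Type*} {p : ι → Fin 2 → K} (hp0 : ∀ i, p i ≠ 0) :
    IsF2Linear (Set.range fun i => Projectivization.mk K (p i) (hp0 i)) ↔
      ∃ U : AddSubgroup (Fin 2 → K), HasPoints K U p := by
  refine exists_congr fun U => ⟨fun h => ⟨fun u hu hu0 => ?_, fun i => ?_⟩, fun hU => ?_⟩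
  · obtain ⟨i, hi⟩ := h.ge ⟨u, hu0, hu, rfl⟩
    obtain ⟨c, hc⟩ := (Projectivization.mk_eq_mk_iff' K _ _ _ _).1 hi.symm
    exact ⟨i, c, hc⟩
  · obtain ⟨u, hu0, hu, hui⟩ := h.le ⟨i, rfl⟩
    obtain ⟨c, rfl⟩ := (Projectivization.mk_eq_mk_iff' K _ _ _ _).1 hui
    exact ⟨c, (smul_ne_zero_iff.1 hu0).1, hu⟩
  · refine Set.Subset.antisymm ?_ ?_
    · rintro _ ⟨i, rfl⟩
      obtain ⟨c, hc, hcU⟩ := hU.exists_smul_mem i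
      exact ⟨c • p i, smul_ne_zero hc (hp0 i), hcU,
        (Projectivization.mk_eq_mk_iff' K _ _ _ _).2 ⟨c, rfl⟩⟩
    · rintro _ ⟨u, hu0, hu, rfl⟩
      obtain ⟨i, c, hc⟩ := hU.exists_smul_eq u hu hu0
      exact ⟨i, ((Projectivization.mk_eq_mk_iff' K _ _ _ _).2 ⟨c, hc⟩).symm⟩

/-- The standard alternating form on `K²`, which vanishes exactly on pairs of dependent vectors. -/
def areaForm : LinearMap.BilinForm K (Fin 2 → K) := Matrix.toBilin' !![0, 1; -1, 0]

lemma areaForm_apply (u v : Fin 2 → K) : areaForm u v = u 0 * v 1 - u 1 * v 0 := by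
  simp [areaForm, Matrix.toBilin'_apply, Fin.sum_univ_two, sub_eq_add_neg]

lemma areaForm_self (u : Fin 2 → K) : areaForm u u = 0 := by
  rw [areaForm_apply, mul_comm, sub_self]

lemma areaForm_ne_zero_iff {u v : Fin 2 → K} :
    areaForm u v ≠ 0 ↔ LinearIndependent K ![u, v] := by
  have hdet : areaForm u v = (Matrix.of ![u, v]).det := by
    rw [areaForm_apply, Matrix.det_fin_two]
    simp [mul_comm (u 1)]
  rw [hdet, ← isUnit_iff_ne_zero, ← Matrix.isUnit_iff_isUnit_det]
  exact Matrix.linearIndependent_rows_iff_isUnit.symm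

lemma exists_smul_eq_of_areaForm_eq_zero {u v : Fin 2 → K} (hu : u ≠ 0) (h : areaForm u v = 0) :
    ∃ c : K, c • u = v := by
  by_contra! hv
  exact areaForm_ne_zero_iff.2 ((LinearIndependent.pair_iff' hu).2 hv) h

lemma pt2_eq_pt2_iff {a b c d : K} (hab : ¬(a = 0 ∧ b = 0)) (hcd : ¬(c = 0 ∧ d = 0)) :
    pt2 a b hab = pt2 c d hcd ↔ a * d = b * c := by
  rw [← not_iff_not, ← ne_eq, ← Projectivization.independent_pair_iff_ne]
  simp only [pt2]
  rw [Projectivization.independent_mk_iff_LinearIndependent, ← areaForm_ne_zero_iff,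
    areaForm_apply, sub_ne_zero]
  rfl

section IsHead

variable {ι : Type*} {p : ι → Fin 2 → K}

/-- The multiple `v` of `p k` with `areaForm (p i) v = 1`, whose position on that affine line is
the affine coordinate of the point `⟨p k⟩` when `⟨p i⟩` is taken as the point at infinity.
Because `0⁻¹ = 0`, it is `0` for `k = i`. -/
def normalizedRep (p : ι → Fin 2 → K) (i k : ι) : Fin 2 → K :=
  (areaForm (p i) (p k))⁻¹ • p k

/-- Among five points in characteristic two, `⟨p i⟩` is a head when the affine coordinates of
the other four sum to zero, i.e. form a coset of an additive group of order four. -/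
def IsHead [Fintype ι] (p : ι → Fin 2 → K) (i : ι) : Prop :=
  ∑ k, normalizedRep p i k = 0

lemma normalizedRep_self (p : ι → Fin 2 → K) (i : ι) : normalizedRep p i i = 0 := by
  rw [normalizedRep, areaForm_self, inv_zero, zero_smul]

lemma areaForm_normalizedRep (hp : Pairwise fun i j => areaForm (p i) (p j) ≠ 0) {i k : ι}
    (hk : k ≠ i) : areaForm (p i) (normalizedRep p i k) = 1 := by
  rw [normalizedRep, map_smul, smul_eq_mul, inv_mul_cancel₀ (hp hk.symm)]

lemma normalizedRep_injOn (hp : Pairwise fun i j => areaForm (p i) (p j) ≠ 0) (i : ι) :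
    Set.InjOn (normalizedRep p i) {i}ᶜ := by
  intro j hj k _ hjk
  exact index_eq_of_smul_eq_smul (p := p) (fun _ _ h => areaForm_ne_zero_iff.1 (hp h))
    (inv_ne_zero (hp (Ne.symm hj))) hjk

lemma areaForm_sum_normalizedRep (hp : Pairwise fun i j => areaForm (p i) (p j) ≠ 0) {i : ι}
    {s : Finset ι} (hi : i ∉ s) : areaForm (p i) (∑ k ∈ s, normalizedRep p i k) = s.card := by
  rw [map_sum, Finset.sum_congr rfl fun k hk =>
    areaForm_normalizedRep hp (ne_of_mem_of_not_mem hk hi), Finset.sum_const, nsmul_one]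

lemma HasPoints.exists_smul_normalizedRep_eq {U : AddSubgroup (Fin 2 → K)}
    (hU : HasPoints K U p) {i : ι} {v : Fin 2 → K} (hv : v ∈ U)
    (hiv : areaForm (p i) v ≠ 0) :
    ∃ k ≠ i, areaForm (p i) v • normalizedRep p i k = v := by
  have hv0 : v ≠ 0 := fun h => hiv (by rw [h, map_zero])
  obtain ⟨k, d, hdv⟩ := hU.exists_smul_eq v hv hv0
  have hivd : areaForm (p i) v = d * areaForm (p i) (p k) := by rw [← hdv, map_smul, smul_eq_mul]
  have hik : areaForm (p i) (p k) ≠ 0 := right_ne_zero_of_mul (hivd ▸ hiv)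
  refine ⟨k, fun hki => hik (by rw [hki, areaForm_self]), ?_⟩
  rw [normalizedRep, hivd, smul_smul, mul_assoc, mul_inv_cancel₀ hik, mul_one, hdv]

variable [Fintype ι]

lemma HasPoints.isHead_of_sum_eq_zero {U : AddSubgroup (Fin 2 → K)} (hU : HasPoints K U p)
    {i : ι} {w : K} (hw : w ≠ 0) {A : Finset (Fin 2 → K)}
    (hA : ∀ v ∈ A, v ∈ U ∧ areaForm (p i) v = w) (hAcard : A.card + 1 = Fintype.card ι)
    (hA0 : ∑ v ∈ A, v = 0) : IsHead p i := by
  have herase : A.card = (Finset.univ.erase i).card := by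
    rw [Finset.card_erase_of_mem (Finset.mem_univ i), Finset.card_univ, ← hAcard,
      Nat.add_sub_cancel]
  have hsub : A ⊆ (Finset.univ.erase i).image fun k => w • normalizedRep p i k := by
    intro v hv
    obtain ⟨hvU, rfl⟩ := hA v hv
    obtain ⟨k, hk, hkv⟩ := hU.exists_smul_normalizedRep_eq hvU hw
    exact Finset.mem_image.2 ⟨k, Finset.mem_erase.2 ⟨hk, Finset.mem_univ k⟩, hkv⟩
  have hle := Finset.card_image_le (s := Finset.univ.erase i)
    (f := fun k => w • normalizedRep p i k)
  have himage := Finset.eq_of_subset_of_card_le hsub (herase ▸ hle)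
  have hinj := Finset.card_image_iff.1 (himage ▸ herase)
  refine (smul_eq_zero_iff_right hw).1 ?_
  calc w • ∑ k, normalizedRep p i k
      = ∑ k ∈ Finset.univ.erase i, w • normalizedRep p i k := by
        rw [Finset.smul_sum, Finset.sum_erase _ (by rw [normalizedRep_self, smul_zero])]
    _ = ∑ v ∈ A, v := by rw [himage, Finset.sum_image hinj]
    _ = 0 := hA0

variable [CharP K 2]

-- The coset `c • p j + {0, a, b, a + b} • p i` in `U` consists of four vectors with the same area
-- against `p i`, so up to a scalar they are the four normalized representatives.
lemma HasPoints.isHead (hι : Fintype.card ι = 5) {U : AddSubgroup (Fin 2 → K)}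
    (hU : HasPoints K U p) {i j : ι} (hij : areaForm (p i) (p j) ≠ 0) {a b : K}
    (ha : a ≠ 0) (hb : b ≠ 0) (hab : a ≠ b) (haU : a • p i ∈ U) (hbU : b • p i ∈ U) :
    IsHead p i := by
  obtain ⟨c, hc, hcU⟩ := hU.exists_smul_mem j
  have hi0 : p i ≠ 0 := by
    intro h
    exact hij (by rw [h, map_zero, LinearMap.zero_apply])
  have hw : areaForm (p i) (c • p j) ≠ 0 := by
    rw [map_smul]
    exact smul_ne_zero hc hij
  have hinj : Function.Injective fun s : K => c • p j + s • p i :=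
    (add_right_injective _).comp (smul_left_injective K hi0)
  have hcard := card_zero_insert_pair_add ha hb hab
  refine hU.isHead_of_sum_eq_zero hw
    (A := ({0, a, b, a + b} : Finset K).image fun s => c • p j + s • p i) ?_ ?_ ?_
  · intro v hv
    obtain ⟨s, hs, rfl⟩ := Finset.mem_image.1 hv
    have hsU : s • p i ∈ U := by
      simp only [Finset.mem_insert, Finset.mem_singleton] at hs
      rcases hs with rfl | rfl | rfl | rfl
      · rw [zero_smul]; exact U.zero_mem
      · exact haU
      · exact hbU
      · rw [add_smul]; exact U.add_mem haU hbU
    refine ⟨U.add_mem hcU hsU, ?_⟩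
    rw [map_add, map_smul _ s, areaForm_self, smul_zero, add_zero]
  · rw [Finset.card_image_of_injective _ hinj, hcard, hι]
  · have h4 : 4 • (c • p j) = 0 := by
      rw [show 4 = 2 * 2 from rfl, mul_nsmul, two_nsmul, add_self_eq_zero_of_charTwo (K := K)]
    rw [Finset.sum_image hinj.injOn, Finset.sum_add_distrib, Finset.sum_const, hcard, h4,
      ← Finset.sum_smul, sum_zero_insert_pair_add ha hb hab, zero_smul, add_zero]

lemma IsHead.exists_sum_eq_normalizedRep (hι : Fintype.card ι = 5) {i : ι} (hhead : IsHead p i)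
    {s : Finset ι} (hi : i ∉ s) (hs : Odd s.card) :
    ∃ k ≠ i, ∑ j ∈ s, normalizedRep p i j = normalizedRep p i k := by
  have hcompl : (insert i s)ᶜ.card = 4 - s.card := by
    rw [Finset.card_compl, Finset.card_insert_of_notMem hi, hι]
    omega
  have hle : (insert i s).card ≤ 5 := hι ▸ Finset.card_le_univ _
  rw [Finset.card_insert_of_notMem hi] at hle
  obtain hs1 | hs3 : s.card = 1 ∨ s.card = 3 := by
    obtain ⟨m, hm⟩ := hs
    omega
  · obtain ⟨k, rfl⟩ := Finset.card_eq_one.1 hs1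
    exact ⟨k, (Finset.notMem_singleton.1 hi).symm, Finset.sum_singleton _ _⟩
  · obtain ⟨k, hk⟩ := Finset.card_eq_one.1 (hcompl.trans (by rw [hs3]))
    have hki : k ∉ insert i s := Finset.mem_compl.1 (hk ▸ Finset.mem_singleton_self k)
    refine ⟨k, fun h => hki (h ▸ Finset.mem_insert_self k s), ?_⟩
    have hsum : ∑ j ∈ s, normalizedRep p i j + normalizedRep p i k = 0 := by
      rw [← hhead, ← Finset.sum_add_sum_compl (insert i s), hk, Finset.sum_singleton,
        Finset.sum_insert hi, normalizedRep_self, zero_add]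
    rw [eq_neg_of_add_eq_zero_left hsum,
      neg_eq_of_add_eq_zero_left (add_self_eq_zero_of_charTwo (K := K) _)]

-- The group is the `F₂`-span of the normalized representatives: an even sum of these has area
-- zero against `p i`, and an odd sum is again one of them.
lemma IsHead.exists_hasPoints (hι : Fintype.card ι = 5)
    (hp : Pairwise fun i j => areaForm (p i) (p j) ≠ 0) {i : ι} (hi0 : p i ≠ 0)
    (hhead : IsHead p i) : ∃ U : AddSubgroup (Fin 2 → K), HasPoints K U p := by
  have hmem (k : ι) : normalizedRep p i k ∈ AddSubgroup.closure (Set.range (normalizedRep p i)) :=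
    AddSubgroup.subset_closure ⟨k, rfl⟩
  refine ⟨AddSubgroup.closure (Set.range (normalizedRep p i)), fun u hu _ => ?_, fun k => ?_⟩
  · obtain ⟨s, rfl⟩ := exists_finset_sum_eq_of_mem_closure_range
      (add_self_eq_zero_of_charTwo (K := K)) hu
    have his : i ∉ s.erase i := Finset.notMem_erase i s
    rw [← Finset.sum_erase s (normalizedRep_self p i)]
    rcases Nat.even_or_odd (s.erase i).card with heven | hodd
    · have harea : areaForm (p i) (∑ k ∈ s.erase i, normalizedRep p i k) = 0 := by
        rw [areaForm_sum_normalizedRep hp his, (CharP.cast_eq_zero_iff K 2 _).2 heven.two_dvd]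
      exact ⟨i, exists_smul_eq_of_areaForm_eq_zero hi0 harea⟩
    · obtain ⟨k, _, hk⟩ := hhead.exists_sum_eq_normalizedRep hι his hodd
      exact ⟨k, _, hk.symm⟩
  · rcases eq_or_ne k i with rfl | hki
    · have hcard : 1 < (Finset.univ.erase k).card := by
        rw [Finset.card_erase_of_mem (Finset.mem_univ k), Finset.card_univ, hι]
        norm_num
      obtain ⟨l, hl, m, hm, hlm⟩ := Finset.one_lt_card.1 hcard
      have hlk := Finset.ne_of_mem_erase hl
      have hmk := Finset.ne_of_mem_erase hm
      have harea : areaForm (p k) (normalizedRep p k l - normalizedRep p k m) = 0 := by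
        rw [map_sub, areaForm_normalizedRep hp hlk, areaForm_normalizedRep hp hmk, sub_self]
      obtain ⟨c, hc⟩ := exists_smul_eq_of_areaForm_eq_zero hi0 harea
      refine ⟨c, ?_, hc ▸ sub_mem (hmem l) (hmem m)⟩
      rintro rfl
      rw [zero_smul] at hc
      exact hlm (normalizedRep_injOn hp k hlk hmk (sub_eq_zero.1 hc.symm))
    · exact ⟨_, inv_ne_zero (hp hki.symm), hmem k⟩

theorem isF2Linear_range_mk_iff_exists_isHead (hι : Fintype.card ι = 5) (hp0 : ∀ i, p i ≠ 0)
    (hp : Pairwise fun i j => areaForm (p i) (p j) ≠ 0) :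
    IsF2Linear (Set.range fun i => Projectivization.mk K (p i) (hp0 i)) ↔ ∃ i, IsHead p i := by
  rw [isF2Linear_range_mk_iff]
  constructor
  · rintro ⟨U, hU⟩
    have hpow (n : ℕ) : Nat.card ι + 1 ≠ 2 ^ n := by
      rw [Nat.card_eq_fintype_card, hι]
      intro h6
      have h3 : 3 ∣ 2 := Nat.prime_three.dvd_of_dvd_pow (h6 ▸ (by norm_num : 3 ∣ 5 + 1))
      exact absurd h3 (by norm_num)
    obtain ⟨i, a, b, ha, hb, hab, haU, hbU⟩ :=
      hU.exists_pair_smul_mem hpow hp0 fun _ _ h => areaForm_ne_zero_iff.1 (hp h)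
    have : Nontrivial ι := Fintype.one_lt_card_iff_nontrivial.1 (by omega)
    obtain ⟨j, hj⟩ := exists_ne i
    exact ⟨i, hU.isHead hι (hp hj.symm) ha hb hab haU hbU⟩
  · rintro ⟨i, hhead⟩
    exact hhead.exists_hasPoints hι hp (hp0 i)

end IsHead

section FivePoints

variable {γ β : K}

/-- Coordinate vectors of the points `(1:0), (0:1), (1:1), (γ:1), (β+1:1)`. -/
def clubVec (γ β : K) : Fin 5 → Fin 2 → K :=
  ![![1, 0], ![0, 1], ![1, 1], ![γ, 1], ![β + 1, 1]]

lemma clubVec_ne_zero (γ β : K) (i : Fin 5) : clubVec γ β i ≠ 0 := by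
  fin_cases i <;> simp [clubVec]

lemma range_mk_clubVec (γ β : K) :
    (Set.range fun i => Projectivization.mk K (clubVec γ β i) (clubVec_ne_zero γ β i)) =
      {pt2 1 0 (by simp), pt2 0 1 (by simp), pt2 1 1 (by simp), pt2 γ 1 (by simp),
        pt2 (β + 1) 1 (by simp)} := by
  ext P
  simp only [Set.mem_range, Fin.exists_fin_succ, IsEmpty.exists_iff, or_false, Set.mem_insert_iff,
    Set.mem_singleton_iff, eq_comm (a := P)]
  rfl

variable [CharP K 2]

lemma pairwise_areaForm_clubVec_ne_zero (hγ0 : γ ≠ 0) (hγ1 : γ ≠ 1) (hβ0 : β ≠ 0) (hβ1 : β ≠ 1)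
    (hβγ : β + 1 ≠ γ) :
    Pairwise fun i j => areaForm (clubVec γ β i) (clubVec γ β j) ≠ 0 := by
  intro i j hij
  rw [areaForm_apply]
  fin_cases i <;> fin_cases j <;>
    simp only [clubVec, Fin.zero_eta, Fin.mk_one, Fin.reduceFinMk, Matrix.cons_val] <;> grind

lemma exists_isHead_clubVec_iff (hγ0 : γ ≠ 0) (hγ1 : γ ≠ 1) (hβ0 : β ≠ 0) (hβ1 : β ≠ 1)
    (hβγ : β + 1 ≠ γ) :
    (∃ i, IsHead (clubVec γ β) i) ↔
      (β = γ ∨ β = (γ + 1)⁻¹ ∨ β ^ 2 = γ + 1 ∨ β = 1 + γ⁻¹ ∨ β = 1 + γ ^ 2) := by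
  have hγ1' : γ + 1 ≠ 0 := fun h => hγ1 (CharTwo.add_eq_zero.1 h)
  have hβ1' : β + 1 ≠ 0 := fun h => hβ1 (CharTwo.add_eq_zero.1 h)
  have hβγ' : β + 1 + γ ≠ 0 := fun h => hβγ (CharTwo.add_eq_zero.1 h)
  have head_iff (i : Fin 5) : IsHead (clubVec γ β) i ↔
      ![β = γ, β = (γ + 1)⁻¹, β = 1 + γ⁻¹, β = 1 + γ ^ 2, β ^ 2 = γ + 1] i := by
    simp only [IsHead, normalizedRep, areaForm_apply, clubVec, Fin.sum_univ_five, funext_iff,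
      Fin.forall_fin_two, Pi.add_apply, Pi.smul_apply, Pi.zero_apply, smul_eq_mul]
    fin_cases i <;>
      simp only [Fin.zero_eta, Fin.mk_one, Fin.reduceFinMk, Matrix.cons_val] <;> grind
  simp only [head_iff, Fin.exists_fin_succ, IsEmpty.exists_iff, or_false,
    Fin.succ_zero_eq_one, Fin.succ_one_eq_two, Matrix.cons_val]
  tauto

end FivePoints

section Coincidence

variable [CharP K 2] {γ : K}

lemma pairwise_ne_of_sq_add_self_add_one_ne_zero {s : K} (hγ0 : γ ≠ 0) (hγ1 : γ ≠ 1)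
    (hs : s ^ 2 = γ + 1) (hγ : γ ^ 2 + γ + 1 ≠ 0) :
    [γ, (γ + 1)⁻¹, s, 1 + γ⁻¹, 1 + γ ^ 2].Pairwise (· ≠ ·) := by
  have hγ1' : γ + 1 ≠ 0 := fun h => hγ1 (CharTwo.add_eq_zero.1 h)
  simp only [List.pairwise_cons, List.mem_cons, List.not_mem_nil, or_false, forall_eq_or_imp,
    forall_eq, List.Pairwise.nil, and_true, false_imp_iff, implies_true]
  refine ⟨⟨?_, ?_, ?_, ?_⟩, ⟨?_, ?_, ?_⟩, ⟨?_, ?_⟩, ?_⟩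
  all_goals grind

lemma values_eq_of_sq_add_self_add_one_eq_zero {s : K} (hs : s ^ 2 = γ + 1)
    (hγ : γ ^ 2 + γ + 1 = 0) :
    (γ + 1)⁻¹ = γ ∧ s = γ ∧ 1 + γ⁻¹ = γ ∧ 1 + γ ^ 2 = γ := by
  have h2 : (2 : K) = 0 := CharTwo.two_eq_zero
  have hmul : γ * (γ + 1) = 1 := by linear_combination hγ - h2
  have hsq : γ ^ 2 = γ + 1 := by linear_combination hγ - (γ + 1) * h2
  refine ⟨inv_eq_of_mul_eq_one_left hmul, CharTwo.sq_injective (hs.trans hsq.symm), ?_, ?_⟩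
  · rw [inv_eq_of_mul_eq_one_right hmul]
    linear_combination h2
  · linear_combination hγ - γ * h2

lemma pow_four_eq_self_iff (hγ : γ ^ 2 + γ + 1 = 0) {x : K} :
    x ^ 4 = x ↔ x = 0 ∨ x = 1 ∨ x = γ ∨ x = γ + 1 := by
  have hfactor : x ^ 4 - x = x * ((x - 1) * ((x - γ) * (x - (γ + 1)))) := by grind
  rw [← sub_eq_zero, hfactor]
  simp only [mul_eq_zero, sub_eq_zero]

lemma fivePoints_eq_f4Subline (hγ : γ ^ 2 + γ + 1 = 0) :
    ({pt2 1 0 (by simp), pt2 0 1 (by simp), pt2 1 1 (by simp), pt2 γ 1 (by simp),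
        pt2 (γ + 1) 1 (by simp)} : Set (Projectivization K (Fin 2 → K))) =
      {P | ∃ x : K, x ^ 4 = x ∧ P = pt2 1 x (by simp)} ∪ {pt2 0 1 (by simp)} := by
  have h2 : (2 : K) = 0 := CharTwo.two_eq_zero
  have hmul : γ * (γ + 1) = 1 := by linear_combination hγ - h2
  have hpt : pt2 γ 1 (by simp) = pt2 1 (γ + 1) (by simp) := by
    rw [pt2_eq_pt2_iff, hmul, one_mul]
  have hpt' : pt2 (γ + 1) 1 (by simp) = pt2 1 γ (by simp) := by
    rw [pt2_eq_pt2_iff, mul_comm, hmul, one_mul]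
  ext P
  simp only [pow_four_eq_self_iff hγ, or_and_right, exists_or, exists_eq_left, hpt, hpt',
    Set.mem_insert_iff, Set.mem_singleton_iff, Set.mem_union, Set.mem_ofPred_eq]
  tauto

end Coincidence

lemma sq_pow_two_pow_pred_eq_self [Fintype K] {h : ℕ} (hcard : Fintype.card K = 2 ^ h) (x : K) :
    (x ^ 2 ^ (h - 1)) ^ 2 = x := by
  have hh : h ≠ 0 := by
    rintro rfl
    exact Fintype.one_lt_card.ne' hcard
  rw [← pow_mul, ← pow_succ, Nat.sub_add_cancel (Nat.one_le_iff_ne_zero.2 hh), ← hcard,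
    FiniteField.pow_card]

theorem club_characterisation_general {K : Type*} [Field K] [CharP K 2] (γ β : K) (hγ0 : γ ≠ 0)
    (hγ1 : γ ≠ 1) (hβ0 : β ≠ 0) (hβ1 : β ≠ 1) (hβγ : β + 1 ≠ γ) :
    (IsF2Linear ({pt2 (1 : K) 0 (by simp), pt2 (0 : K) 1 (by simp), pt2 (1 : K) 1 (by simp),
          pt2 γ 1 (by simp), pt2 (β + 1) 1 (by simp)} : Set (Projectivization K (Fin 2 → K)))
        ↔ (β = γ ∨ β = (γ + 1)⁻¹ ∨ β ^ 2 = γ + 1 ∨ β = 1 + γ⁻¹ ∨ β = 1 + γ ^ 2)) ∧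
    (∀ s : K, s ^ 2 = γ + 1 →
      ¬ List.Pairwise (· ≠ ·) [γ, (γ + 1)⁻¹, s, 1 + γ⁻¹, 1 + γ ^ 2] →
      ((γ + 1)⁻¹ = γ ∧ s = γ ∧ 1 + γ⁻¹ = γ ∧ 1 + γ ^ 2 = γ) ∧
      γ ^ 3 = 1 ∧
      (β = γ →
        ({pt2 (1 : K) 0 (by simp), pt2 (0 : K) 1 (by simp), pt2 (1 : K) 1 (by simp),
            pt2 γ 1 (by simp), pt2 (β + 1) 1 (by simp)} : Set (Projectivization K (Fin 2 → K)))
          = {P | ∃ x : K, x ^ 4 = x ∧ P = pt2 1 x (by simp)} ∪ {pt2 (0 : K) 1 (by simp)})) := by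
  refine ⟨?_, fun s hs hcoincide => ?_⟩
  · rw [← range_mk_clubVec, ← exists_isHead_clubVec_iff hγ0 hγ1 hβ0 hβ1 hβγ]
    exact isF2Linear_range_mk_iff_exists_isHead (Fintype.card_fin 5) (clubVec_ne_zero γ β)
      (pairwise_areaForm_clubVec_ne_zero hγ0 hγ1 hβ0 hβ1 hβγ)
  · have hγ : γ ^ 2 + γ + 1 = 0 := by
      by_contra hγ
      exact hcoincide (pairwise_ne_of_sq_add_self_add_one_ne_zero hγ0 hγ1 hs hγ)
    refine ⟨values_eq_of_sq_add_self_add_one_eq_zero hs hγ, ?_, ?_⟩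
    · linear_combination (γ - 1) * hγ
    · rintro rfl
      exact fivePoints_eq_f4Subline hγ

/-- Lemma 3.3 of the paper: characterisation of when
`C = {(1:0),(0:1),(1:1),(γ:1),(β+1:1)} ⊆ PG(1,q)` is an `F₂`-linear set, together with
the coincidence case.  Here `β² = γ+1` encodes `β = √(γ+1)`, and `(γ+1)^(2^(h-1))`
is the unique square root of `γ+1` in `F_q`; `F₄ = {x | x⁴ = x}`. -/
theorem club_characterisation
    {K : Type*} [Field K] [Fintype K] (h : ℕ)
    (hcard : Fintype.card K = 2 ^ h)
    (γ β : K) (hγ0 : γ ≠ 0) (hγ1 : γ ≠ 1) (hβ0 : β ≠ 0) (hβ1 : β ≠ 1) (hβγ : β + 1 ≠ γ) :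
    (IsF2Linear ({pt2 (1 : K) 0 (by simp), pt2 (0 : K) 1 (by simp), pt2 (1 : K) 1 (by simp),
          pt2 γ 1 (by simp), pt2 (β + 1) 1 (by simp)} : Set (Projectivization K (Fin 2 → K)))
        ↔ (β = γ ∨ β = (γ + 1)⁻¹ ∨ β ^ 2 = γ + 1 ∨ β = 1 + γ⁻¹ ∨ β = 1 + γ ^ 2)) ∧
    (¬ List.Pairwise (· ≠ ·)
        [γ, (γ + 1)⁻¹, (γ + 1) ^ 2 ^ (h - 1), 1 + γ⁻¹, 1 + γ ^ 2] →
      ((γ + 1)⁻¹ = γ ∧ (γ + 1) ^ 2 ^ (h - 1) = γ ∧ 1 + γ⁻¹ = γ ∧ 1 + γ ^ 2 = γ) ∧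
      γ ^ 3 = 1 ∧
      (β = γ →
        ({pt2 (1 : K) 0 (by simp), pt2 (0 : K) 1 (by simp), pt2 (1 : K) 1 (by simp),
            pt2 γ 1 (by simp), pt2 (β + 1) 1 (by simp)} : Set (Projectivization K (Fin 2 → K)))
          = {P | ∃ x : K, x ^ 4 = x ∧ P = pt2 1 x (by simp)} ∪ {pt2 (0 : K) 1 (by simp)})) := by
  have : CharP K 2 := charP_of_card_eq_prime_pow hcard
  exact (club_characterisation_general γ β hγ0 hγ1 hβ0 hβ1 hβγ).imp_right
    fun hall => hall _ (sq_pow_two_pow_pred_eq_self hcard (γ + 1))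
end
end

section
/- Let q = 2^h, let α, β ∈ F_q \ {0,1} with αβ ≠ 1, and set γ = (β+1)/(αβ+1). Then the set C = {(1:0), (0:1), (1:1), (γ:1), (β+1:1)} of points of PG(1,q) is an F_2-linear set if and only if α ∈ {1/β², 1 + 1/β, β, 1/√β, 1/(β+1)}, where √β denotes the unique square root of β in F_q (i.e. the condition α = 1/√β means α²β = 1). -/
open scoped Classical

noncomputable section

variable {K : Type*} [Field K]

/-! An additive group with exactly one nonzero vector on each of five points would have order six,
which is not a power of two; so in a group defining an `F₂`-linear set of five points some point `P`
carries two nonzero vectors. Move `P` to infinity. Adding those vectors to one on another point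
shows that the four affine coordinates of the other points contain, hence are, a coset of a group of
order four, which in characteristic two means that their sum vanishes; conversely every such coset
arises. When `P` has affine coordinate `p` and the remaining points are `(1 : 0)` and `r, s, t`, the
map `z ↦ 1 / (z - p)` turns the condition into `p² = rs + rt + st`. The five choices of `P` among
`(1 : 0), 0, 1, γ, β + 1` give the five values of `α`. -/

open scoped LinearAlgebra.Projectivization

section LinearSet

variable {V W : Type*} [AddCommGroup V] [Module K V] [AddCommGroup W] [Module K W]

/-- The linear set `L_U` of points spanned by the nonzero vectors of an additive subgroup `U`. -/
def linearSet (U : AddSubgroup V) : Set (ℙ K V) :=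
  {P | ∃ u : V, ∃ hu : u ≠ 0, u ∈ U ∧ Projectivization.mk K u hu = P}

/-- The point `P` is spanned by at least two nonzero vectors of `U`; in the language of linear sets
over `F₂`, it has weight at least two in `L_U`. -/
def IsHeavy (U : AddSubgroup V) (P : ℙ K V) : Prop :=
  {u : V | ∃ hu : u ≠ 0, u ∈ U ∧ Projectivization.mk K u hu = P}.Nontrivial

/-- `T` is the linear set of some additive subgroup for which `P` has weight at least two. -/
def IsLinearSetHeavyAt (T : Set (ℙ K V)) (P : ℙ K V) : Prop :=
  ∃ U : AddSubgroup V, T = linearSet U ∧ IsHeavy U P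

theorem IsHeavy.mem_linearSet {U : AddSubgroup V} {P : ℙ K V} (h : IsHeavy U P) :
    P ∈ linearSet U :=
  h.nonempty

theorem exists_natCard_eq_two_pow [CharP K 2] (U : AddSubgroup V) [Finite U] :
    ∃ n, Nat.card U = 2 ^ n := by
  have two_nsmul_eq_zero (u : U) : 2 • u = 0 := Subtype.ext <| by
    rw [AddSubgroup.coe_nsmul, ← Nat.cast_smul_eq_nsmul K, CharP.cast_eq_zero, zero_smul,
      AddSubgroup.coe_zero]
  let := AddCommGroup.zmodModule two_nsmul_eq_zero
  exact ⟨_, by simpa using Module.natCard_eq_pow_finrank (K := ZMod 2) (V := U)⟩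

theorem exists_isHeavy [CharP K 2] {U : AddSubgroup V}
    (hU : ∀ n, (linearSet (K := K) U).ncard + 1 ≠ 2 ^ n) :
    ∃ P : ℙ K V, IsHeavy U P := by
  by_contra! h
  have card_eq : ((U : Set V) \ {0}).ncard = (linearSet (K := K) U).ncard := by
    refine Set.ncard_congr (fun u hu => Projectivization.mk K u hu.2) ?_ ?_ ?_
    · exact fun u hu => ⟨u, hu.2, hu.1, rfl⟩
    · exact fun u v hu hv huv =>
        Set.not_nontrivial_iff.1 (h _) ⟨hu.2, hu.1, huv⟩ ⟨hv.2, hv.1, rfl⟩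
    · rintro P ⟨u, hu, huU, rfl⟩
      exact ⟨u, ⟨huU, hu⟩, rfl⟩
  have finite_diff : ((U : Set V) \ {0}).Finite :=
    Set.finite_of_ncard_ne_zero fun h0 => hU 0 (by rw [← card_eq, h0]; rfl)
  have finite_U : (U : Set V).Finite := finite_diff.of_sdiff (Set.finite_singleton 0)
  have := finite_U.to_subtype
  obtain ⟨n, hn⟩ := exists_natCard_eq_two_pow (K := K) U
  refine hU n ?_
  rw [← card_eq, Set.ncard_sdiff_singleton_add_one U.zero_mem finite_U, ← hn]
  rfl

theorem linearSet_map (f : V ≃ₗ[K] W) (U : AddSubgroup V) :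
    linearSet (U.map (f : V →+ W)) =
      Projectivization.map f.toLinearMap f.injective '' linearSet U := by
  ext P
  constructor
  · rintro ⟨-, hu, ⟨u, huU, rfl⟩, rfl⟩
    exact ⟨_, ⟨u, fun h => hu (by simp [h]), huU, rfl⟩, rfl⟩
  · rintro ⟨-, ⟨u, hu, huU, rfl⟩, rfl⟩
    exact ⟨f u, f.map_ne_zero_iff.2 hu, ⟨u, huU, rfl⟩, rfl⟩

theorem isHeavy_map_iff (f : V ≃ₗ[K] W) (U : AddSubgroup V) (P : ℙ K V) :
    IsHeavy (U.map (f : V →+ W)) (Projectivization.map f.toLinearMap f.injective P) ↔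
      IsHeavy U P := by
  refine Iff.trans ?_ (Set.image_nontrivial f.injective)
  rw [IsHeavy]
  congr! 1
  ext v
  constructor
  · rintro ⟨hu, ⟨u, huU, rfl⟩, hP⟩
    have hu0 : u ≠ 0 := fun h => hu (by simp [h])
    exact ⟨u, ⟨hu0, huU, Projectivization.map_injective _ f.injective hP⟩, rfl⟩
  · rintro ⟨u, ⟨hu, huU, rfl⟩, rfl⟩
    exact ⟨f.map_ne_zero_iff.2 hu, ⟨u, huU, rfl⟩, rfl⟩

theorem isLinearSetHeavyAt_map_iff (f : V ≃ₗ[K] W) {T : Set (ℙ K V)} {P : ℙ K V} :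
    IsLinearSetHeavyAt (Projectivization.map f.toLinearMap f.injective '' T)
        (Projectivization.map f.toLinearMap f.injective P) ↔
      IsLinearSetHeavyAt T P := by
  refine f.toAddEquiv.mapAddSubgroup.surjective.exists.trans (exists_congr fun U => ?_)
  refine and_congr ?_ (isHeavy_map_iff f U P)
  exact (linearSet_map f U).congr_right.trans
    (Projectivization.map_injective _ f.injective).image_injective.eq_iff

end LinearSet

theorem isF2Linear_iff_exists_isLinearSetHeavyAt [CharP K 2] {T : Set (ℙ K (Fin 2 → K))}
    (hT : ∀ n, T.ncard + 1 ≠ 2 ^ n) :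
    IsF2Linear T ↔ ∃ P ∈ T, IsLinearSetHeavyAt T P := by
  constructor
  · rintro ⟨U, rfl⟩
    obtain ⟨P, hP⟩ := exists_isHeavy hT
    exact ⟨P, hP.mem_linearSet, U, rfl, hP⟩
  · rintro ⟨-, -, U, hU, -⟩
    exact ⟨U, hU⟩

section AffineCoordinate

/-- The point `(1 : 0)` of `PG(1,q)`. -/
def pointAtInfinity : ℙ K (Fin 2 → K) := pt2 1 0 (by simp)

/-- The point `(z : 1)` of `PG(1,q)`. -/
def affinePoint (z : K) : ℙ K (Fin 2 → K) := pt2 z 1 (by simp)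

theorem mk_eq_pointAtInfinity_iff {u : Fin 2 → K} (hu : u ≠ 0) :
    Projectivization.mk K u hu = pointAtInfinity ↔ u 1 = 0 := by
  rw [pointAtInfinity, pt2, Projectivization.mk_eq_mk_iff']
  constructor
  · rintro ⟨a, rfl⟩
    simp
  · exact fun h => ⟨u 0, by ext i; fin_cases i <;> simp [h]⟩

theorem mk_eq_affinePoint_iff {u : Fin 2 → K} (hu : u ≠ 0) (z : K) :
    Projectivization.mk K u hu = affinePoint z ↔ u 1 ≠ 0 ∧ u 0 / u 1 = z := by
  rw [affinePoint, pt2, Projectivization.mk_eq_mk_iff']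
  constructor
  · rintro ⟨a, rfl⟩
    have ha : a ≠ 0 := fun h => hu (by simp [h])
    simp [ha]
  · rintro ⟨h, rfl⟩
    exact ⟨u 1, by ext i; fin_cases i <;> simp [h, mul_div_cancel₀]⟩

theorem eq_pointAtInfinity_or_eq_affinePoint (P : ℙ K (Fin 2 → K)) :
    P = pointAtInfinity ∨ ∃ z, P = affinePoint z := by
  induction P using Projectivization.ind with
  | h u hu =>
    rw [mk_eq_pointAtInfinity_iff]
    exact or_iff_not_imp_left.2 fun h => ⟨_, (mk_eq_affinePoint_iff hu _).2 ⟨h, rfl⟩⟩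

theorem affinePoint_ne_pointAtInfinity (z : K) : affinePoint z ≠ pointAtInfinity := by
  rw [affinePoint, pt2, Ne, mk_eq_pointAtInfinity_iff]
  simp

theorem affinePoint_injective : Function.Injective (affinePoint (K := K)) := by
  intro z w h
  rw [affinePoint, pt2, mk_eq_affinePoint_iff] at h
  simpa using h.2

theorem ncard_insert_pointAtInfinity (A : Finset K) :
    (insert pointAtInfinity (affinePoint '' (A : Set K))).ncard = A.card + 1 := by
  rw [Set.ncard_insert_of_notMem _ (A.finite_toSet.image _),
    Set.ncard_image_of_injective _ affinePoint_injective, Set.ncard_coe_finset]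
  rintro ⟨z, -, hz⟩
  exact affinePoint_ne_pointAtInfinity z hz

theorem insert_pointAtInfinity_eq_iff {A : Set K} {T : Set (ℙ K (Fin 2 → K))} :
    insert pointAtInfinity (affinePoint '' A) = T ↔
      pointAtInfinity ∈ T ∧ affinePoint ⁻¹' T = A := by
  constructor
  · rintro rfl
    refine ⟨Set.mem_insert _ _, Set.ext fun z => ?_⟩
    simp [affinePoint_ne_pointAtInfinity, affinePoint_injective.eq_iff]
  · rintro ⟨hT, rfl⟩
    ext P
    obtain rfl | ⟨z, rfl⟩ := eq_pointAtInfinity_or_eq_affinePoint P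
    · simp [hT]
    · simp [affinePoint_ne_pointAtInfinity, affinePoint_injective.eq_iff]

theorem affinePoint_mem_linearSet_iff {U : AddSubgroup (Fin 2 → K)} {z : K} :
    affinePoint z ∈ linearSet U ↔ ∃ u ∈ U, u 1 ≠ 0 ∧ u 0 / u 1 = z := by
  constructor
  · rintro ⟨u, hu, huU, h⟩
    exact ⟨u, huU, (mk_eq_affinePoint_iff hu z).1 h⟩
  · rintro ⟨u, huU, h⟩
    have hu : u ≠ 0 := fun h0 => h.1 (by simp [h0])
    exact ⟨u, hu, huU, (mk_eq_affinePoint_iff hu z).2 h⟩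

theorem isHeavy_pointAtInfinity_iff {U : AddSubgroup (Fin 2 → K)} :
    IsHeavy U pointAtInfinity ↔
      ∃ a b : K, a ≠ 0 ∧ b ≠ 0 ∧ a ≠ b ∧ ![a, 0] ∈ U ∧ ![b, 0] ∈ U := by
  have eq_vec {u : Fin 2 → K} (h : u 1 = 0) : u = ![u 0, 0] := by
    ext i; fin_cases i <;> simp [h]
  simp only [IsHeavy, mk_eq_pointAtInfinity_iff]
  constructor
  · rintro ⟨u, ⟨hu, huU, hu1⟩, v, ⟨hv, hvU, hv1⟩, huv⟩
    rw [eq_vec hu1] at hu huU huv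
    rw [eq_vec hv1] at hv hvU huv
    exact ⟨u 0, v 0, by simpa using hu, by simpa using hv, fun h => huv (by rw [h]), huU, hvU⟩
  · rintro ⟨a, b, ha, hb, hab, haU, hbU⟩
    exact ⟨![a, 0], ⟨by simpa, haU, rfl⟩, ![b, 0], ⟨by simpa, hbU, rfl⟩, by simpa⟩

theorem exists_coset_subset_of_isHeavy_pointAtInfinity {U : AddSubgroup (Fin 2 → K)}
    (hU : IsHeavy U pointAtInfinity) (hne : (affinePoint ⁻¹' linearSet U).Nonempty) :
    ∃ a b c : K, a ≠ 0 ∧ b ≠ 0 ∧ a ≠ b ∧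
      {c, c + a, c + b, c + (a + b)} ⊆ affinePoint ⁻¹' linearSet U := by
  obtain ⟨a, b, ha, hb, hab, haU, hbU⟩ := isHeavy_pointAtInfinity_iff.1 hU
  obtain ⟨z, hz⟩ := hne
  obtain ⟨u, hu, hu1, rfl⟩ := affinePoint_mem_linearSet_iff.1 hz
  have add_mem {d : K} (hd : ![d, 0] ∈ U) : affinePoint (u 0 / u 1 + d / u 1) ∈ linearSet U :=
    affinePoint_mem_linearSet_iff.2
      ⟨u + ![d, 0], U.add_mem hu hd, by simpa, by simp [add_div]⟩
  refine ⟨a / u 1, b / u 1, u 0 / u 1, div_ne_zero ha hu1, div_ne_zero hb hu1,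
    (div_left_inj' hu1).not.2 hab, ?_⟩
  simp only [Set.insert_subset_iff, Set.singleton_subset_iff, ← add_div a]
  exact ⟨hz, add_mem haU, add_mem hbU, add_mem (by simpa using U.add_mem haU hbU)⟩

/-- The projectivity `z ↦ 1 / (z - p)` of `PG(1,q)`, which takes `p` to infinity. -/
def moveToInfinity (p : K) : (Fin 2 → K) ≃ₗ[K] (Fin 2 → K) where
  toFun u := ![u 1, u 0 - p * u 1]
  invFun u := ![u 1 + p * u 0, u 0]
  map_add' u v := by ext i; fin_cases i <;> simp [mul_add, add_sub_add_comm]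
  map_smul' c u := by ext i; fin_cases i <;> simp [mul_sub, mul_left_comm]
  left_inv u := by ext i; fin_cases i <;> simp
  right_inv u := by ext i; fin_cases i <;> simp

theorem map_moveToInfinity_self (p : K) :
    Projectivization.map (moveToInfinity p).toLinearMap (moveToInfinity p).injective
      (affinePoint p) = pointAtInfinity := by
  rw [affinePoint, pt2, Projectivization.map_mk, mk_eq_pointAtInfinity_iff]
  simp [moveToInfinity]

theorem map_moveToInfinity_pointAtInfinity (p : K) :
    Projectivization.map (moveToInfinity p).toLinearMap (moveToInfinity p).injective
      pointAtInfinity = affinePoint 0 := by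
  rw [pointAtInfinity, pt2, Projectivization.map_mk, mk_eq_affinePoint_iff]
  simp [moveToInfinity]

theorem map_moveToInfinity_affinePoint {p z : K} (hz : z ≠ p) :
    Projectivization.map (moveToInfinity p).toLinearMap (moveToInfinity p).injective
      (affinePoint z) = affinePoint (z - p)⁻¹ := by
  rw [affinePoint, pt2, Projectivization.map_mk, mk_eq_affinePoint_iff]
  simp [moveToInfinity, sub_ne_zero.2 hz]

/- The point at infinity goes to `0`, which is also the junk value of `(p - p)⁻¹`. -/
theorem map_moveToInfinity_image {p : K} {A : Set K} (hp : p ∈ A) :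
    Projectivization.map (moveToInfinity p).toLinearMap (moveToInfinity p).injective ''
        insert pointAtInfinity (affinePoint '' A) =
      insert pointAtInfinity (affinePoint '' ((fun z => (z - p)⁻¹) '' A)) := by
  have image_diff : (fun z => affinePoint (z - p)⁻¹) '' (A \ {p}) =
      Projectivization.map (moveToInfinity p).toLinearMap (moveToInfinity p).injective ''
        (affinePoint '' (A \ {p})) := by
    rw [Set.image_image]
    exact Set.image_congr fun z hz => (map_moveToInfinity_affinePoint hz.2).symm
  rw [← Set.insert_sdiff_self_of_mem hp]
  simp only [Set.image_insert_eq, map_moveToInfinity_self, map_moveToInfinity_pointAtInfinity,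
    sub_self, inv_zero, ← image_diff, Set.image_image, Set.insert_comm]

/-- The additive subgroup of vectors `(x + n c, n)` with `x ∈ H` and `n` an integer. In
characteristic two its linear set consists of `(z : 1)` for `z ∈ c + H` and, for `H ≠ 0`,
of `(1 : 0)`. -/
def cosetSubgroup (c : K) (H : AddSubgroup K) : AddSubgroup (Fin 2 → K) :=
  (AddSubgroup.zmultiples 1).comap (Pi.evalAddMonoidHom (fun _ => K) 1) ⊓
    H.comap (Pi.evalAddMonoidHom (fun _ => K) 0 -
      (AddMonoidHom.mulLeft c).comp (Pi.evalAddMonoidHom (fun _ => K) 1))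

end AffineCoordinate

section CharTwo

variable [CharP K 2]

theorem mem_closure_pair_iff_of_charTwo {a b x : K} :
    x ∈ AddSubgroup.closure {a, b} ↔ x = 0 ∨ x = a ∨ x = b ∨ x = a + b := by
  rw [AddSubgroup.mem_closure_pair]
  constructor
  · rintro ⟨m, n, rfl⟩
    rw [zsmul_eq_mul, zsmul_eq_mul]
    obtain hm | hm := CharTwo.intCast_cases (R := K) m <;>
      obtain hn | hn := CharTwo.intCast_cases (R := K) n <;> simp [hm, hn]
  · rintro (rfl | rfl | rfl | rfl)
    exacts [⟨0, 0, by simp⟩, ⟨1, 0, by simp⟩, ⟨0, 1, by simp⟩, ⟨1, 1, by simp⟩]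

theorem card_coset_eq_four {a b : K} (ha : a ≠ 0) (hb : b ≠ 0) (hab : a ≠ b) (c : K) :
    ({c, c + a, c + b, c + (a + b)} : Finset K).card = 4 := by
  have hab' : a + b ≠ 0 := CharTwo.add_eq_zero.not.2 hab
  rw [Finset.card_insert_of_notMem, Finset.card_insert_of_notMem, Finset.card_pair] <;>
    simp [*]

theorem sum_eq_zero_iff_exists_eq_coset {A : Finset K} (hA : A.card = 4) :
    ∑ z ∈ A, z = 0 ↔
      ∃ a b c : K, a ≠ 0 ∧ b ≠ 0 ∧ a ≠ b ∧ A = {c, c + a, c + b, c + (a + b)} := by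
  constructor
  · intro h
    obtain ⟨c, B, hc, rfl, hB⟩ := Finset.card_eq_succ.1 hA
    obtain ⟨x, y, z, hxy, hxz, hyz, rfl⟩ := Finset.card_eq_three.1 hB
    have hz : c + (c + x + (c + y)) = z := by
      rw [Finset.sum_insert hc, Finset.sum_insert (by simp [*]), Finset.sum_pair hyz] at h
      linear_combination h + (c - z) * CharTwo.two_eq_zero (R := K)
    simp only [Finset.mem_insert, Finset.mem_singleton, not_or] at hc
    refine ⟨c + x, c + y, c, CharTwo.add_eq_zero.not.2 hc.1, CharTwo.add_eq_zero.not.2 hc.2.1,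
      by simpa, ?_⟩
    rw [hz, CharTwo.add_cancel_left, CharTwo.add_cancel_left]
  · rintro ⟨a, b, c, ha, hb, hab, rfl⟩
    have hab' : a + b ≠ 0 := CharTwo.add_eq_zero.not.2 hab
    rw [Finset.sum_insert (by simp [*]), Finset.sum_insert (by simp [*]),
      Finset.sum_pair (by simpa)]
    linear_combination (2 * c + a + b) * CharTwo.two_eq_zero (R := K)

theorem mem_cosetSubgroup_iff {c : K} {H : AddSubgroup K} {u : Fin 2 → K} :
    u ∈ cosetSubgroup c H ↔ (u 1 = 0 ∨ u 1 = 1) ∧ u 0 - c * u 1 ∈ H := by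
  have mem_zmultiples_one (x : K) : x ∈ AddSubgroup.zmultiples 1 ↔ x = 0 ∨ x = 1 := by
    rw [AddSubgroup.zmultiples_eq_closure, ← Set.pair_eq_singleton, mem_closure_pair_iff_of_charTwo,
      CharTwo.add_self_eq_zero]
    tauto
  simp [cosetSubgroup, AddSubgroup.mem_inf, mem_zmultiples_one]

theorem affinePoint_mem_linearSet_cosetSubgroup_iff {c z : K} {H : AddSubgroup K} :
    affinePoint z ∈ linearSet (cosetSubgroup c H) ↔ z - c ∈ H := by
  simp only [affinePoint_mem_linearSet_iff, mem_cosetSubgroup_iff]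
  constructor
  · rintro ⟨u, ⟨hu, huH⟩, hu0, rfl⟩
    simpa [hu.resolve_left hu0] using huH
  · exact fun hz => ⟨![z, 1], by simpa using hz⟩

theorem isLinearSetHeavyAt_insert_coset {a b : K} (ha : a ≠ 0) (hb : b ≠ 0) (hab : a ≠ b)
    (c : K) :
    IsLinearSetHeavyAt (insert pointAtInfinity (affinePoint '' {c, c + a, c + b, c + (a + b)}))
      pointAtInfinity := by
  have mem_cosetSubgroup {x : K} (hx : x ∈ AddSubgroup.closure {a, b}) :
      ![x, 0] ∈ cosetSubgroup c (AddSubgroup.closure {a, b}) :=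
    mem_cosetSubgroup_iff.2 (by simpa)
  have heavy : IsHeavy (cosetSubgroup c (AddSubgroup.closure {a, b})) pointAtInfinity :=
    isHeavy_pointAtInfinity_iff.2 ⟨a, b, ha, hb, hab,
      mem_cosetSubgroup (AddSubgroup.subset_closure (by simp)),
      mem_cosetSubgroup (AddSubgroup.subset_closure (by simp))⟩
  refine ⟨_, insert_pointAtInfinity_eq_iff.2 ⟨heavy.mem_linearSet, ?_⟩, heavy⟩
  ext z
  rw [Set.mem_preimage, affinePoint_mem_linearSet_cosetSubgroup_iff,
    mem_closure_pair_iff_of_charTwo]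
  simp [sub_eq_iff_eq_add']

theorem isLinearSetHeavyAt_pointAtInfinity_iff {A : Finset K} (hA : A.card = 4) :
    IsLinearSetHeavyAt (insert pointAtInfinity (affinePoint '' (A : Set K))) pointAtInfinity ↔
      ∑ z ∈ A, z = 0 := by
  rw [sum_eq_zero_iff_exists_eq_coset hA]
  constructor
  · rintro ⟨U, hAU, hU⟩
    have preimage_eq := (insert_pointAtInfinity_eq_iff.1 hAU).2
    have hne : A.Nonempty := Finset.card_pos.1 (by lia)
    obtain ⟨a, b, c, ha, hb, hab, hsub⟩ :=
      exists_coset_subset_of_isHeavy_pointAtInfinity hU (preimage_eq ▸ hne)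
    rw [preimage_eq] at hsub
    refine ⟨a, b, c, ha, hb, hab, (Finset.eq_of_subset_of_card_le ?_ ?_).symm⟩
    · rw [← Finset.coe_subset]
      push_cast
      exact hsub
    · rw [hA, card_coset_eq_four ha hb hab]
  · rintro ⟨a, b, c, ha, hb, hab, rfl⟩
    push_cast
    exact isLinearSetHeavyAt_insert_coset ha hb hab c

theorem isLinearSetHeavyAt_affinePoint_iff {A : Finset K} (hA : A.card = 4) {p : K} (hp : p ∈ A) :
    IsLinearSetHeavyAt (insert pointAtInfinity (affinePoint '' (A : Set K))) (affinePoint p) ↔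
      ∑ z ∈ A, (z - p)⁻¹ = 0 := by
  have inj : Function.Injective fun z => (z - p)⁻¹ := inv_injective.comp sub_left_injective
  rw [← isLinearSetHeavyAt_map_iff (moveToInfinity p), map_moveToInfinity_self,
    map_moveToInfinity_image hp, ← Finset.coe_image, isLinearSetHeavyAt_pointAtInfinity_iff
      (by rw [Finset.card_image_of_injective _ inj, hA]), Finset.sum_image inj.injOn]

theorem isF2Linear_insert_pointAtInfinity_iff {A : Finset K} (hA : A.card = 4) :
    IsF2Linear (insert pointAtInfinity (affinePoint '' (A : Set K))) ↔
      ∑ z ∈ A, z = 0 ∨ ∃ p ∈ A, ∑ z ∈ A, (z - p)⁻¹ = 0 := by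
  have six_ne_two_pow (n : ℕ) : 6 ≠ 2 ^ n := fun h =>
    absurd (Nat.prime_three.dvd_of_dvd_pow (h ▸ by decide : 3 ∣ 2 ^ n)) (by decide)
  rw [isF2Linear_iff_exists_isLinearSetHeavyAt
    (by rw [ncard_insert_pointAtInfinity, hA]; exact six_ne_two_pow)]
  simp only [Set.exists_mem_insert, Set.exists_mem_image, Finset.mem_coe]
  exact or_congr (isLinearSetHeavyAt_pointAtInfinity_iff hA) <|
    exists_congr fun p => and_congr_right (isLinearSetHeavyAt_affinePoint_iff hA)

theorem inv_add_inv_add_inv_eq_zero_iff {p r s t : K} (hr : r ≠ p) (hs : s ≠ p) (ht : t ≠ p) :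
    (r - p)⁻¹ + (s - p)⁻¹ + (t - p)⁻¹ = 0 ↔ p ^ 2 = r * s + r * t + s * t := by
  have hr' := sub_ne_zero.2 hr
  have hs' := sub_ne_zero.2 hs
  have ht' := sub_ne_zero.2 ht
  have sum_eq : (r - p)⁻¹ + (s - p)⁻¹ + (t - p)⁻¹ =
      (r * s + r * t + s * t - p ^ 2) / ((r - p) * (s - p) * (t - p)) := by
    field_simp
    linear_combination (2 * p ^ 2 - (r + s + t) * p) * CharTwo.two_eq_zero (R := K)
  rw [sum_eq, div_eq_zero_iff, or_iff_left (mul_ne_zero (mul_ne_zero hr' hs') ht'), sub_eq_zero,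
    eq_comm]

theorem isF2Linear_five_points_iff {p r s t : K} (hpr : p ≠ r) (hps : p ≠ s) (hpt : p ≠ t)
    (hrs : r ≠ s) (hrt : r ≠ t) (hst : s ≠ t) :
    IsF2Linear {pointAtInfinity, affinePoint p, affinePoint r, affinePoint s, affinePoint t} ↔
      p + r + s + t = 0 ∨ p ^ 2 = r * s + r * t + s * t ∨ r ^ 2 = p * s + p * t + s * t ∨
        s ^ 2 = p * r + p * t + r * t ∨ t ^ 2 = p * r + p * s + r * s := by
  have sum_eq (f : K → K) : ∑ z ∈ {p, r, s, t}, f z = f p + f r + f s + f t := by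
    rw [Finset.sum_insert (by simp [*]), Finset.sum_insert (by simp [*]), Finset.sum_pair hst]
    ring
  have card_eq : ({p, r, s, t} : Finset K).card = 4 := by
    rw [Finset.card_insert_of_notMem, Finset.card_insert_of_notMem, Finset.card_pair] <;> simp [*]
  have linear_iff := isF2Linear_insert_pointAtInfinity_iff card_eq
  simp only [sum_eq, Finset.exists_mem_insert, Finset.mem_singleton, exists_eq_left,
    Finset.coe_insert, Finset.coe_singleton, Set.image_insert_eq, Set.image_singleton, sub_self,
    inv_zero, zero_add, add_zero] at linear_iff
  rw [linear_iff, inv_add_inv_add_inv_eq_zero_iff hpr.symm hps.symm hpt.symm,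
    inv_add_inv_add_inv_eq_zero_iff hpr hrs.symm hrt.symm,
    inv_add_inv_add_inv_eq_zero_iff hps hrs hst.symm,
    inv_add_inv_add_inv_eq_zero_iff hpt hrt hst]

theorem isF2Linear_insert_zero_one_iff {s t : K} (hs0 : s ≠ 0) (hs1 : s ≠ 1) (ht0 : t ≠ 0)
    (ht1 : t ≠ 1) (hst : s ≠ t) :
    IsF2Linear {pointAtInfinity, affinePoint 0, affinePoint 1, affinePoint s, affinePoint t} ↔
      1 + s + t = 0 ∨ s + t + s * t = 0 ∨ s * t = 1 ∨ s ^ 2 = t ∨ t ^ 2 = s := by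
  rw [isF2Linear_five_points_iff zero_ne_one hs0.symm ht0.symm hs1.symm ht1.symm hst,
    eq_comm (a := (0 : K) ^ 2), eq_comm (a := (1 : K) ^ 2)]
  simp

/-- The affine coordinate `γ = (β + 1) / (αβ + 1)` of one of the `q/4`-secants of `A_{α,β,a,b}`. -/
def secantParameter (α β : K) : K := (β + 1) / (α * β + 1)

variable {α β : K}

theorem secantParameter_mul_eq_add_one (hαβ : α * β ≠ 1) :
    secantParameter α β * (α * β + 1) = β + 1 :=
  div_mul_cancel₀ _ (CharTwo.add_eq_zero.not.2 hαβ)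

theorem secantParameter_ne_zero (hβ1 : β ≠ 1) (hαβ : α * β ≠ 1) : secantParameter α β ≠ 0 :=
  div_ne_zero (CharTwo.add_eq_zero.not.2 hβ1) (CharTwo.add_eq_zero.not.2 hαβ)

theorem secantParameter_ne_one (hα1 : α ≠ 1) (hβ0 : β ≠ 0) (hαβ : α * β ≠ 1) :
    secantParameter α β ≠ 1 := by
  rw [secantParameter, Ne, div_eq_iff (CharTwo.add_eq_zero.not.2 hαβ)]
  simpa [eq_comm, hβ0] using hα1

theorem secantParameter_ne_add_one (hα0 : α ≠ 0) (hβ0 : β ≠ 0) (hβ1 : β ≠ 1)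
    (hαβ : α * β ≠ 1) : secantParameter α β ≠ β + 1 := by
  rw [secantParameter, Ne, div_eq_iff (CharTwo.add_eq_zero.not.2 hαβ)]
  simp [CharTwo.add_eq_zero, *]

theorem one_add_secantParameter_add_eq_zero_iff (hβ0 : β ≠ 0) (hαβ : α * β ≠ 1) :
    1 + secantParameter α β + (β + 1) = 0 ↔ α = 1 / β ^ 2 := by
  have hαβ' : α * β + 1 ≠ 0 := CharTwo.add_eq_zero.not.2 hαβ
  have sum_eq : 1 + secantParameter α β + (β + 1) = (α * β ^ 2 + 1) / (α * β + 1) := by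
    rw [eq_div_iff hαβ']
    linear_combination
      secantParameter_mul_eq_add_one hαβ + (α * β + β + 1) * CharTwo.two_eq_zero (R := K)
  rw [sum_eq, div_eq_zero_iff, or_iff_left hαβ', CharTwo.add_eq_zero,
    eq_div_iff (pow_ne_zero 2 hβ0)]

theorem secantParameter_add_add_mul_eq_zero_iff (hβ0 : β ≠ 0) (hβ1 : β ≠ 1)
    (hαβ : α * β ≠ 1) :
    secantParameter α β + (β + 1) + secantParameter α β * (β + 1) = 0 ↔ α = 1 + 1 / β := by
  have hβ1' : β + 1 ≠ 0 := CharTwo.add_eq_zero.not.2 hβ1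
  have hαβ' : α * β + 1 ≠ 0 := CharTwo.add_eq_zero.not.2 hαβ
  have sum_eq : secantParameter α β + (β + 1) + secantParameter α β * (β + 1) =
      (β + 1) * (α * β + (β + 1)) / (α * β + 1) := by
    rw [eq_div_iff hαβ']
    linear_combination
      (β + 2) * secantParameter_mul_eq_add_one hαβ + (β + 1) * CharTwo.two_eq_zero (R := K)
  rw [sum_eq, div_eq_zero_iff, or_iff_left hαβ', mul_eq_zero, or_iff_right hβ1',
    CharTwo.add_eq_zero, one_add_div hβ0, eq_div_iff hβ0]

theorem secantParameter_mul_eq_one_iff (hβ0 : β ≠ 0) (hαβ : α * β ≠ 1) :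
    secantParameter α β * (β + 1) = 1 ↔ α = β := by
  have hαβ' : α * β + 1 ≠ 0 := CharTwo.add_eq_zero.not.2 hαβ
  have sum_eq : secantParameter α β * (β + 1) + 1 = β * (α + β) / (α * β + 1) := by
    rw [eq_div_iff hαβ']
    linear_combination
      (β + 1) * secantParameter_mul_eq_add_one hαβ + (β + 1) * CharTwo.two_eq_zero (R := K)
  rw [← CharTwo.add_eq_zero, sum_eq, div_eq_zero_iff, or_iff_left hαβ', mul_eq_zero,
    or_iff_right hβ0, CharTwo.add_eq_zero]

theorem secantParameter_sq_eq_iff (hβ0 : β ≠ 0) (hβ1 : β ≠ 1) (hαβ : α * β ≠ 1) :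
    secantParameter α β ^ 2 = β + 1 ↔ α ^ 2 * β = 1 := by
  have hβ1' : β + 1 ≠ 0 := CharTwo.add_eq_zero.not.2 hβ1
  have hαβ' : α * β + 1 ≠ 0 := CharTwo.add_eq_zero.not.2 hαβ
  have sum_eq : secantParameter α β ^ 2 + (β + 1) =
      (β + 1) * β * (α ^ 2 * β + 1) / (α * β + 1) ^ 2 := by
    rw [eq_div_iff (pow_ne_zero 2 hαβ')]
    linear_combination
      (secantParameter α β * (α * β + 1) + (β + 1)) * secantParameter_mul_eq_add_one hαβ +
        (β + 1) * (α * β + 1) * CharTwo.two_eq_zero (R := K)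
  rw [← CharTwo.add_eq_zero, sum_eq, div_eq_zero_iff, or_iff_left (pow_ne_zero 2 hαβ'),
    mul_eq_zero, or_iff_right (mul_ne_zero hβ1' hβ0), CharTwo.add_eq_zero]

theorem add_one_sq_eq_secantParameter_iff (hβ0 : β ≠ 0) (hβ1 : β ≠ 1) (hαβ : α * β ≠ 1) :
    (β + 1) ^ 2 = secantParameter α β ↔ α = 1 / (β + 1) := by
  have hβ1' : β + 1 ≠ 0 := CharTwo.add_eq_zero.not.2 hβ1
  have hαβ' : α * β + 1 ≠ 0 := CharTwo.add_eq_zero.not.2 hαβ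
  have sum_eq : (β + 1) ^ 2 + secantParameter α β =
      (β + 1) * β * (α * (β + 1) + 1) / (α * β + 1) := by
    rw [eq_div_iff hαβ']
    linear_combination
      secantParameter_mul_eq_add_one hαβ + (β + 1) * CharTwo.two_eq_zero (R := K)
  rw [← CharTwo.add_eq_zero, sum_eq, div_eq_zero_iff, or_iff_left hαβ', mul_eq_zero,
    or_iff_right (mul_ne_zero hβ1' hβ0), CharTwo.add_eq_zero, eq_div_iff hβ1']

theorem secants_linear_iff_translation_general
    (hα0 : α ≠ 0) (hα1 : α ≠ 1) (hβ0 : β ≠ 0) (hβ1 : β ≠ 1) (hαβ : α * β ≠ 1)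
    {γ : K} (hγ : γ = (β + 1) / (α * β + 1)) :
    IsF2Linear ({pt2 (1 : K) 0 (by simp), pt2 (0 : K) 1 (by simp), pt2 (1 : K) 1 (by simp),
        pt2 γ 1 (by simp), pt2 (β + 1) 1 (by simp)} : Set (Projectivization K (Fin 2 → K)))
      ↔ (α = 1 / β ^ 2 ∨ α = 1 + 1 / β ∨ α = β ∨ α ^ 2 * β = 1 ∨ α = 1 / (β + 1)) := by
  subst hγ
  have linear_iff := isF2Linear_insert_zero_one_iff (secantParameter_ne_zero hβ1 hαβ)
    (secantParameter_ne_one hα1 hβ0 hαβ) (CharTwo.add_eq_zero.not.2 hβ1) (by simpa)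
    (secantParameter_ne_add_one hα0 hβ0 hβ1 hαβ)
  rwa [one_add_secantParameter_add_eq_zero_iff hβ0 hαβ,
    secantParameter_add_add_mul_eq_zero_iff hβ0 hβ1 hαβ, secantParameter_mul_eq_one_iff hβ0 hαβ,
    secantParameter_sq_eq_iff hβ0 hβ1 hαβ, add_one_sq_eq_secantParameter_iff hβ0 hβ1 hαβ]
    at linear_iff

end CharTwo

/-- Lemma 3.3 combined with Theorem 3.2: with `γ = (β+1)/(αβ+1)`, the set
`C = {(1:0),(0:1),(1:1),(γ:1),(β+1:1)} ⊆ PG(1,q)` is `F₂`-linear iff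
`α ∈ {1/β², 1+1/β, β, 1/√β, 1/(β+1)}`; the condition `α = 1/√β` is encoded as `α²β = 1`. -/
theorem secants_linear_iff_translation
    {K : Type*} [Field K] [Fintype K] (h : ℕ)
    (hcard : Fintype.card K = 2 ^ h)
    (α β : K) (hα0 : α ≠ 0) (hα1 : α ≠ 1) (hβ0 : β ≠ 0) (hβ1 : β ≠ 1) (hαβ : α * β ≠ 1)
    (γ : K) (hγ : γ = (β + 1) / (α * β + 1)) :
    IsF2Linear ({pt2 (1 : K) 0 (by simp), pt2 (0 : K) 1 (by simp), pt2 (1 : K) 1 (by simp),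
        pt2 γ 1 (by simp), pt2 (β + 1) 1 (by simp)} : Set (Projectivization K (Fin 2 → K)))
      ↔ (α = 1 / β ^ 2 ∨ α = 1 + 1 / β ∨ α = β ∨ α ^ 2 * β = 1 ∨ α = 1 / (β + 1)) := by
  have : CharP K 2 := charP_of_card_eq_prime_pow hcard
  exact secants_linear_iff_translation_general hα0 hα1 hβ0 hβ1 hαβ hγ
end
end

section
/- Let q = 2^h and let S be a subgroup of the additive group (F_q,+) of order q/4. Suppose α ∈ F_q \ {0,1} satisfies αS = S (where αS = {αs : s ∈ S}). Then α² = α + 1 (so α ∈ F_4 \ F_2 and h is even), and S = {x ∈ F_q : Tr(μx) = 0 and Tr(αμx) = 0} for some μ ∈ F_q. Moreover, in this case, for every β ∈ F_q with β^4 ≠ β (i.e. β ∉ F_4), the additive subgroup S + βS generated by S and βS equals F_q, and for every β ∈ F_4 \ {0} one has βS = S. -/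
open scoped Classical

noncomputable section

variable {K : Type*} [Field K]

/-!
The multipliers `a` with `a S ⊆ S` form a field `E`, because the extension is algebraic, and `S` is
a subspace over `E`. Its codimension over the ground field is `[E : F₂]` times its codimension
over `E`. Here the former is the prime `2` and `α ∈ E` lies outside `F₂`, so `E = F₄` and `S` is a
hyperplane over `E`. Hence `S + βS` is everything as soon as it differs from `S`, that is, for
`β ∉ E`. Nondegeneracy of the trace form writes the hyperplane as the kernel of
`x ↦ Tr_{K/E}(μx)`, and the vanishing of an element of `E` is tested by the absolute traces of its
products with the basis `1, α` of `E` over `F₂`.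
-/

open scoped Pointwise

section Multiplier

variable {F L : Type*} [Field F] [Field L] [Algebra F L] [Algebra.IsAlgebraic F L]
  {S : Submodule F L} {a : L}

/-- The field of multipliers `{a | a S ⊆ S}` of an `F`-subspace `S` of an algebraic extension of
`F`: the largest intermediate field over which `S` is still a subspace. -/
def multiplierField (S : Submodule F L) : IntermediateField F L :=
  subalgebraEquivIntermediateField
    { carrier := {a | ∀ s ∈ S, a * s ∈ S}
      mul_mem' := fun ha hb s hs => by simpa only [mul_assoc] using ha _ (hb s hs)
      add_mem' := fun ha hb s hs => by simpa only [add_mul] using S.add_mem (ha s hs) (hb s hs)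
      algebraMap_mem' := fun c s hs => by simpa only [Algebra.smul_def] using S.smul_mem c hs }

theorem mem_multiplierField_iff_forall : a ∈ multiplierField S ↔ ∀ s ∈ S, a * s ∈ S :=
  Iff.rfl

theorem mem_multiplierField_iff : a ∈ multiplierField S ↔ a • S ≤ S :=
  Iff.symm (Set.image_subset_iff (f := (a * ·)))

theorem smul_eq_self_of_mem_multiplierField (ha : a ∈ multiplierField S) (ha₀ : a ≠ 0) :
    a • S = S :=
  (mem_multiplierField_iff.1 ha).antisymm fun s hs =>
    ⟨a⁻¹ * s, mem_multiplierField_iff_forall.1 (inv_mem ha) s hs, mul_inv_cancel_left₀ ha₀ s⟩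

/-- The subspace `S`, regarded as a subspace over its field of multipliers. -/
def multiplierSubmodule (S : Submodule F L) : Submodule (multiplierField S) L :=
  { S with smul_mem' := fun a s hs => mem_multiplierField_iff_forall.1 a.2 s hs }

theorem sup_smul_eq_top_of_notMem_multiplierField (hS : IsCoatom (multiplierSubmodule S))
    (ha : a ∉ multiplierField S) : S ⊔ a • S = ⊤ := by
  have hlt : multiplierSubmodule S < multiplierSubmodule S ⊔ a • multiplierSubmodule S :=
    left_lt_sup.2 fun hle => ha (mem_multiplierField_iff.2 hle)
  have htop := congrArg (Submodule.restrictScalars F) (hS.2 _ hlt)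
  rwa [Submodule.restrictScalars_sup, Submodule.restrictScalars_top] at htop

theorem finrank_multiplierField_mul_finrank_quotient (S : Submodule F L) :
    Module.finrank F (multiplierField S) *
      Module.finrank (multiplierField S) (L ⧸ multiplierSubmodule S) =
        Module.finrank F (L ⧸ S) := by
  rw [Module.finrank_mul_finrank]
  exact (Submodule.Quotient.restrictScalarsEquiv F (multiplierSubmodule S)).finrank_eq.symm

theorem finrank_multiplierField_eq_of_prime {p : ℕ} (hp : p.Prime)
    (hS : Module.finrank F (L ⧸ S) = p) (hne : multiplierField S ≠ ⊥) :
    Module.finrank F (multiplierField S) = p := by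
  have hdvd : Module.finrank F (multiplierField S) ∣ p :=
    Dvd.intro _ ((finrank_multiplierField_mul_finrank_quotient S).trans hS)
  exact ((Nat.dvd_prime hp).1 hdvd).resolve_left (mt IntermediateField.finrank_eq_one_iff.1 hne)

theorem isCoatom_multiplierSubmodule_of_prime {p : ℕ} (hp : p.Prime)
    (hS : Module.finrank F (L ⧸ S) = p) (hne : multiplierField S ≠ ⊥) :
    IsCoatom (multiplierSubmodule S) := by
  have hmul := finrank_multiplierField_mul_finrank_quotient S
  rw [finrank_multiplierField_eq_of_prime hp hS hne, hS, Nat.mul_eq_left hp.ne_zero] at hmul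
  exact isSimpleModule_iff_isCoatom.1 (isSimpleModule_iff_finrank_eq_one.2 hmul)

end Multiplier

section Trace

variable {F E L : Type*} [Field F] [Field E] [Field L]

theorem exists_mem_iff_trace_mul_eq_zero [Algebra E L] [FiniteDimensional E L]
    [Algebra.IsSeparable E L] {H : Submodule E L} (hH : IsCoatom H) :
    ∃ μ : L, ∀ x, x ∈ H ↔ Algebra.trace E L (μ * x) = 0 := by
  obtain ⟨f, hf, hle⟩ := H.exists_le_ker_of_lt_top hH.lt_top
  have hker : LinearMap.ker f = H :=
    (hH.le_iff.1 hle).resolve_left (mt LinearMap.ker_eq_top.1 hf)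
  obtain ⟨μ, rfl⟩ := (LinearMap.BilinForm.toDual _ (traceForm_nondegenerate E L)).surjective f
  exact ⟨μ, fun x => hker ▸ Iff.rfl⟩

theorem eq_zero_iff_forall_trace_mul_eq_zero [Algebra F E] [FiniteDimensional F E]
    [Algebra.IsSeparable F E] {s : Set E} (hs : Submodule.span F s = ⊤) {x : E} :
    x = 0 ↔ ∀ e ∈ s, Algebra.trace F E (e * x) = 0 := by
  refine ⟨by rintro rfl; simp, fun h => (traceForm_nondegenerate F E).2 x fun e => ?_⟩
  have hzero : (Algebra.traceForm F E).flip x = 0 := LinearMap.ext_on hs h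
  exact DFunLike.congr_fun hzero e

theorem trace_algebraMap_mul [Algebra F E] [Algebra E L] [Algebra F L] [IsScalarTower F E L]
    [FiniteDimensional F E] [FiniteDimensional E L] (e : E) (x : L) :
    Algebra.trace F L (algebraMap E L e * x) = Algebra.trace F E (e * Algebra.trace E L x) := by
  rw [← Algebra.trace_trace (S := E), ← Algebra.smul_def, map_smul, smul_eq_mul]

theorem exists_mem_iff_forall_trace_mul_eq_zero [Algebra F E] [Algebra E L] [Algebra F L]
    [IsScalarTower F E L] [FiniteDimensional F E] [FiniteDimensional E L]
    [Algebra.IsSeparable F E] [Algebra.IsSeparable E L] {s : Set E}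
    (hs : Submodule.span F s = ⊤) {H : Submodule E L} (hH : IsCoatom H) :
    ∃ μ : L, ∀ x, x ∈ H ↔ ∀ e ∈ s, Algebra.trace F L (algebraMap E L e * (μ * x)) = 0 := by
  obtain ⟨μ, hμ⟩ := exists_mem_iff_trace_mul_eq_zero hH
  refine ⟨μ, fun x => ?_⟩
  simp only [hμ, trace_algebraMap_mul, eq_zero_iff_forall_trace_mul_eq_zero hs]

theorem span_one_pair_eq_top_of_finrank_eq_two [Algebra F E] (h : Module.finrank F E = 2) {a : E}
    (ha : a ∉ (⊥ : Subalgebra F E)) : Submodule.span F {1, a} = ⊤ := by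
  have hli : LinearIndependent F ![1, a] :=
    (LinearIndependent.pair_iff' one_ne_zero).2 fun c hc =>
      ha ⟨c, (Algebra.algebraMap_eq_smul_one c).trans hc⟩
  simpa [Set.pair_comm] using hli.span_eq_top_of_card_eq_finrank (by simp [h])

theorem exists_mem_iff_trace_mul_eq_zero_and [Algebra F L]
    [FiniteDimensional F L] [Algebra.IsSeparable F L] {S : Submodule F L}
    (hS : Module.finrank F (L ⧸ S) = 2) {a : L} (haS : a ∈ multiplierField S)
    (ha : a ∉ (⊥ : IntermediateField F L)) :
    ∃ μ : L, ∀ x, x ∈ S ↔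
      Algebra.trace F L (μ * x) = 0 ∧ Algebra.trace F L (a * μ * x) = 0 := by
  have hne : multiplierField S ≠ ⊥ := ne_of_mem_of_not_mem' haS ha
  have hdeg := finrank_multiplierField_eq_of_prime Nat.prime_two hS hne
  have ha' : (⟨a, haS⟩ : multiplierField S) ∉ (⊥ : Subalgebra F (multiplierField S)) :=
    fun ⟨c, hc⟩ => ha ⟨c, congrArg Subtype.val hc⟩
  have hspan := span_one_pair_eq_top_of_finrank_eq_two hdeg ha'
  obtain ⟨μ, hμ⟩ := exists_mem_iff_forall_trace_mul_eq_zero hspan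
    (isCoatom_multiplierSubmodule_of_prime Nat.prime_two hS hne)
  exact ⟨μ, fun x => (hμ x).trans (by simp [mul_assoc])⟩

end Trace

section Finite

variable {F : Type*} [Field F] [Finite F]

open Polynomial in
theorem mem_intermediateField_iff_pow_eq_self {L : Type*} [Field L] [Algebra F L]
    (E : IntermediateField F L) [FiniteDimensional F E] {x : L} :
    x ∈ E ↔ x ^ Nat.card F ^ Module.finrank F E = x := by
  have : Finite E := Module.finite_of_finite F
  have := Fintype.ofFinite E
  rw [← Module.natCard_eq_pow_finrank (K := F) (V := E), Nat.card_eq_fintype_card]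
  refine ⟨fun hx => congrArg Subtype.val (FiniteField.pow_card (⟨x, hx⟩ : E)), fun hx => ?_⟩
  have hsplits : (X ^ Fintype.card E - X : E[X]).Splits := by
    rw [splits_iff_card_roots, FiniteField.roots_X_pow_card_sub_X, ← Finset.card_def,
      Finset.card_univ, FiniteField.X_pow_card_sub_X_natDegree_eq E Fintype.one_lt_card]
  obtain ⟨y, rfl⟩ : x ∈ Set.range (algebraMap E L) := hsplits.mem_range_of_isRoot
    (FiniteField.X_pow_card_sub_X_ne_zero E Fintype.one_lt_card) (x := x) (by simp [hx])
  exact y.2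

variable {M : Type*} [AddCommGroup M] [Module F M]

theorem finrank_eq_of_natCard_eq_pow {k : ℕ} (h : Nat.card M = Nat.card F ^ k) :
    Module.finrank F M = k := by
  have : Finite M := Nat.finite_of_card_ne_zero (h ▸ pow_ne_zero k Nat.card_pos.ne')
  exact Nat.pow_right_injective Finite.one_lt_card (Module.natCard_eq_pow_finrank.symm.trans h)

theorem finrank_quotient_eq_of_natCard_eq_div [Finite M] {V : Submodule F M} {k : ℕ}
    (h : Nat.card V = Nat.card M / Nat.card F ^ k) : Module.finrank F (M ⧸ V) = k := by
  refine finrank_eq_of_natCard_eq_pow (Nat.eq_of_mul_eq_mul_left (Nat.card_pos (α := V)) ?_)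
  rw [← V.card_eq_card_quotient_mul_card, h]
  have hle : Nat.card F ^ k ≤ Nat.card M := (Nat.div_pos_iff.1 (h ▸ Nat.card_pos)).2
  rw [Module.natCard_eq_pow_finrank (K := F) (V := M)] at hle ⊢
  exact (Nat.div_mul_cancel
    (pow_dvd_pow _ ((Nat.pow_le_pow_iff_right Finite.one_lt_card).1 hle))).symm

end Finite

theorem smulSub_toAddSubgroup {R : Type*} [Ring R] [Module R K] [SMulCommClass K R K] (β : K)
    (V : Submodule R K) : smulSub β V.toAddSubgroup = (β • V).toAddSubgroup :=
  rfl

section ZModTwo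

variable [Algebra (ZMod 2) K]

theorem Tr_finrank_eq_algebraMap_trace [Finite K] (x : K) :
    Tr (Module.finrank (ZMod 2) K) x = algebraMap (ZMod 2) K (Algebra.trace (ZMod 2) K x) := by
  rw [FiniteField.algebraMap_trace_eq_sum_pow, Nat.card_zmod, Tr]

theorem eq_zero_or_eq_one_of_mem_bot {x : K} (hx : x ∈ (⊥ : IntermediateField (ZMod 2) K)) :
    x = 0 ∨ x = 1 := by
  obtain ⟨c, rfl⟩ := hx
  fin_cases c
  · exact .inl (map_zero _)
  · exact .inr (map_one _)

end ZModTwo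

theorem sq_eq_add_one_of_pow_four_eq_self {R : Type*} [CommRing R] [NoZeroDivisors R] [CharP R 2]
    {a : R} (h0 : a ≠ 0) (h1 : a ≠ 1) (h : a ^ 4 = a) : a ^ 2 = a + 1 := by
  have hfactor : a * (a - 1) * (a ^ 2 - (a + 1)) = 0 := by
    linear_combination h + (a - a ^ 3) * CharTwo.two_eq_zero (R := R)
  simpa [h0, h1, sub_eq_zero] using hfactor

/-- Lemma 3.6: if `S` has order `q/4` and `αS = S` for some
`α ∉ {0,1}`, then `α² = α + 1` (so `α ∈ F₄ \ F₂` and `h` is even),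
`S = {x | Tr(μx) = Tr(αμx) = 0}` for some `μ`, `S + βS = F_q` for every `β ∉ F₄`,
and `βS = S` for every `β ∈ F₄ \ {0}`. -/
theorem S_eq_alphaS
    {K : Type*} [Field K] [Fintype K] (h : ℕ)
    (hcard : Fintype.card K = 2 ^ h)
    (S : AddSubgroup K) (hS : Nat.card S = 2 ^ h / 4)
    (α : K) (hα0 : α ≠ 0) (hα1 : α ≠ 1) (hαS : smulSub α S = S) :
    α ^ 2 = α + 1 ∧ Even h ∧
    (∃ μ : K, (S : Set K) = {x : K | Tr h (μ * x) = 0 ∧ Tr h (α * μ * x) = 0}) ∧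
    (∀ β : K, β ^ 4 ≠ β → S ⊔ smulSub β S = (⊤ : AddSubgroup K)) ∧
    (∀ β : K, β ≠ 0 → β ^ 4 = β → smulSub β S = S) := by
  have : CharP K 2 := charP_of_card_eq_prime_pow hcard
  let _ : Algebra (ZMod 2) K := ZMod.algebra K 2
  rw [← Nat.card_eq_fintype_card] at hcard
  obtain rfl : Module.finrank (ZMod 2) K = h :=
    finrank_eq_of_natCard_eq_pow (by rwa [Nat.card_zmod])
  obtain ⟨V, rfl⟩ : ∃ V : Submodule (ZMod 2) K, V.toAddSubgroup = S := ⟨S.toZModSubmodule 2, rfl⟩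
  simp only [smulSub_toAddSubgroup, ← Submodule.sup_toAddSubgroup] at hαS ⊢
  have hV : Module.finrank (ZMod 2) (K ⧸ V) = 2 :=
    finrank_quotient_eq_of_natCard_eq_div (by rwa [hcard, Nat.card_zmod])
  have hαV : α ∈ multiplierField V :=
    mem_multiplierField_iff.2 (Submodule.toAddSubgroup_injective hαS).le
  have hα : α ∉ (⊥ : IntermediateField (ZMod 2) K) :=
    fun hbot => (eq_zero_or_eq_one_of_mem_bot hbot).elim hα0 hα1
  have hne : multiplierField V ≠ ⊥ := ne_of_mem_of_not_mem' hαV hα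
  have hdeg := finrank_multiplierField_eq_of_prime Nat.prime_two hV hne
  have hcoatom := isCoatom_multiplierSubmodule_of_prime Nat.prime_two hV hne
  have hmem (β : K) : β ∈ multiplierField V ↔ β ^ 4 = β := by
    simpa [hdeg] using mem_intermediateField_iff_pow_eq_self (multiplierField V)
  obtain ⟨μ, hμ⟩ := exists_mem_iff_trace_mul_eq_zero_and hV hαV hα
  refine ⟨sq_eq_add_one_of_pow_four_eq_self hα0 hα1 ((hmem α).1 hαV), ?_, ⟨μ, Set.ext fun x => ?_⟩,
    fun β hβ => congrArg _ (sup_smul_eq_top_of_notMem_multiplierField hcoatom (mt (hmem β).1 hβ)),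
    fun β hβ0 hβ => congrArg _ (smul_eq_self_of_mem_multiplierField ((hmem β).2 hβ) hβ0)⟩
  · rw [← Module.finrank_mul_finrank (ZMod 2) (multiplierField V) K, hdeg]
    exact even_two_mul _
  · simpa [Tr_finrank_eq_algebraMap_trace] using hμ x
end
end
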